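/- arXiv:2509.03045 — 2 statements merged into one kernel-verified Lean document; each statement's English description precedes it below -/
import Mathlib

section
/- Let d = 2 and let b be the planar hard-sphere kernel b(c) = ½√(1−c) on the unit circle S¹. Then LS(√2, b) holds; in particular the optimal log-Sobolev constant satisfies Λ_b ≥ √2 and 2√(Λ_b) ≥ 1. -/
open MeasureTheory
open scoped RealInnerProductSpace

noncomputable section

/-- Euclidean space `ℝ^d`. -/
abbrev E (d : ℕ) : Type := EuclideanSpace ℝ (Fin d)

/-- The unit sphere `S^{d-1}` of `ℝ^d`. -/
abbrev Sph (d : ℕ) : Type := Metric.sphere (0 : E d) 1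

/-- The surface measure on the unit sphere, realized as a Hausdorff measure. -/
def sphMeasure (d : ℕ) : Measure (Sph d) := μH[(d : ℝ) - 1]

open Classical in
/-- The 0-homogeneous extension of a function defined on the unit sphere. -/
def homogExt {d : ℕ} (F : Sph d → ℝ) (x : E d) : ℝ :=
  if hx : x = 0 then 0
  else F ⟨‖x‖⁻¹ • x, by
    rw [mem_sphere_zero_iff_norm, norm_smul, norm_inv, norm_norm,
      inv_mul_cancel₀ (norm_ne_zero_iff.mpr hx)]⟩

/-- Smoothness of a function on the sphere, via its 0-homogeneous extension. -/
def SphSmooth {d : ℕ} (F : Sph d → ℝ) : Prop :=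
  ContDiffOn ℝ (⊤ : ℕ∞) (homogExt F) {x : E d | x ≠ 0}

/-- Spherical gradient: the Euclidean gradient of the 0-homogeneous extension. -/
def sphGrad {d : ℕ} (F : Sph d → ℝ) (σ : Sph d) : E d :=
  gradient (homogExt F) (σ : E d)

/-- Euclidean Laplacian of a function on `ℝ^d`. -/
def lapl {d : ℕ} (f : E d → ℝ) (x : E d) : ℝ :=
  ∑ i : Fin d,
    fderiv ℝ (fun y => fderiv ℝ f y (EuclideanSpace.single i 1)) x (EuclideanSpace.single i 1)

/-- Spherical Laplacian: the Euclidean Laplacian of the 0-homogeneous extension. -/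
def sphLap {d : ℕ} (F : Sph d → ℝ) (σ : Sph d) : ℝ :=
  lapl (homogExt F) (σ : E d)

/-- The spherical linear Boltzmann operator `𝓑` with kernel `b`. -/
def sphB {d : ℕ} (b : ℝ → ℝ) (F : Sph d → ℝ) (σ : Sph d) : ℝ :=
  ∫ (σ' : Sph d), (F σ' - F σ) * b ⟪(σ' : E d), (σ : E d)⟫ ∂(sphMeasure d)

/-- The intertwined iterated carré du champ `Γ²_{𝓑,Δ}(g,g)`. -/
def Gamma2BD {d : ℕ} (b : ℝ → ℝ) (g : Sph d → ℝ) (σ : Sph d) : ℝ :=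
  (1 / 2) * sphB b (fun τ => ‖sphGrad g τ‖ ^ 2) σ
    - ⟪sphGrad g σ, sphGrad (fun τ => sphB b g τ) σ⟫

/-- The iterated carré du champ `Γ²_{Δ,Δ}(g,g)` of the spherical Laplacian. -/
def Gamma2DD {d : ℕ} (g : Sph d → ℝ) (σ : Sph d) : ℝ :=
  (1 / 2) * sphLap (fun τ => ‖sphGrad g τ‖ ^ 2) σ
    - ⟪sphGrad g σ, sphGrad (fun τ => sphLap g τ) σ⟫

/-- A collision kernel: non-negative, measurable, satisfying the Lévy condition. -/
def LevyKernel (d : ℕ) (b : ℝ → ℝ) : Prop :=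
  Measurable b ∧ (∀ c ∈ Set.Icc (-1 : ℝ) 1, 0 ≤ b c) ∧
    ∀ e : Sph d,
      Integrable
        (fun σ' : Sph d => (1 - ⟪(e : E d), (σ' : E d)⟫ ^ 2) * b ⟪(e : E d), (σ' : E d)⟫)
        (sphMeasure d)

/-- The log-Sobolev inequality `LS(Λ, b)` on the sphere. -/
def LS (d : ℕ) (b : ℝ → ℝ) (Λ : ℝ) : Prop :=
  ∀ f : Sph d → ℝ, SphSmooth f → (∀ σ, 0 < f σ) → (∀ σ, f (-σ) = f σ) →
    Λ * ∫ (σ : Sph d), (∫ (σ' : Sph d),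
          (f σ' - f σ) ^ 2 / (f σ' + f σ) * b ⟪(σ' : E d), (σ : E d)⟫ ∂(sphMeasure d))
        ∂(sphMeasure d)
      ≤ ∫ (σ : Sph d), Gamma2BD b (fun τ => Real.log (f τ)) σ * f σ ∂(sphMeasure d)

/-- The point of the unit circle with angle `θ`. -/
def circlePt (θ : ℝ) : Sph 2 :=
  ⟨!₂[Real.cos θ, Real.sin θ], by
    rw [mem_sphere_zero_iff_norm, EuclideanSpace.norm_eq]
    simp [Fin.sum_univ_two]⟩

@[simp] lemma circlePt_apply_zero (θ : ℝ) : (circlePt θ : E 2) 0 = Real.cos θ := rfl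

@[simp] lemma circlePt_apply_one (θ : ℝ) : (circlePt θ : E 2) 1 = Real.sin θ := rfl

lemma inner_circlePt (s t : ℝ) :
    ⟪(circlePt s : E 2), (circlePt t : E 2)⟫ = Real.cos (s - t) := by
  rw [Real.cos_sub]
  simp [PiLp.inner_apply, Fin.sum_univ_two]
  ring

lemma dist_circlePt_sq (s t : ℝ) :
    dist (circlePt s) (circlePt t) ^ 2 = 2 - 2 * Real.cos (s - t) := by
  rw [Subtype.dist_eq, dist_eq_norm, norm_sub_sq_real, inner_circlePt]
  simp
  ring

lemma lipschitzWith_circlePt : LipschitzWith 1 circlePt := by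
  refine LipschitzWith.of_dist_le_mul fun s t => ?_
  rw [NNReal.coe_one, one_mul]
  refine abs_le_of_sq_le_sq' ?_ dist_nonneg |>.2
  rw [dist_circlePt_sq, Real.dist_eq, sq_abs]
  linarith [Real.one_sub_sq_div_two_le_cos (x := s - t)]

lemma circlePt_periodic : Function.Periodic circlePt (2 * Real.pi) := by
  intro t
  simp [circlePt]

lemma circlePt_add_pi (t : ℝ) : circlePt (t + Real.pi) = -circlePt t := by
  ext i
  fin_cases i <;> simp [circlePt]

lemma circlePt_surjective : Function.Surjective circlePt := by
  rintro ⟨x, hx⟩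
  have hx' : x 0 ^ 2 + x 1 ^ 2 = 1 := by
    rw [mem_sphere_zero_iff_norm, EuclideanSpace.norm_eq, Real.sqrt_eq_one] at hx
    simpa [Fin.sum_univ_two] using hx
  have hn : ‖(⟨x 0, x 1⟩ : ℂ)‖ = 1 := by
    rw [Complex.norm_def, Complex.normSq_mk, Real.sqrt_eq_one]
    linarith
  have h0 : (⟨x 0, x 1⟩ : ℂ) ≠ 0 := by
    intro h
    simp [h] at hn
  refine ⟨Complex.arg ⟨x 0, x 1⟩, ?_⟩
  ext i
  fin_cases i
  · simp [circlePt, Complex.cos_arg h0, hn]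
  · simp [circlePt, Complex.sin_arg, hn]

lemma circlePt_eq_iff {s t : ℝ} :
    circlePt s = circlePt t ↔ (s : Real.Angle) = (t : Real.Angle) := by
  constructor
  · intro h
    refine Real.Angle.cos_sin_inj ?_ ?_
    · simpa using congrArg (fun p : Sph 2 => (p : E 2) 0) h
    · simpa using congrArg (fun p : Sph 2 => (p : E 2) 1) h
  · intro h
    obtain ⟨k, hk⟩ := Real.Angle.angle_eq_iff_two_pi_dvd_sub.1 h
    have : s = t + k * (2 * Real.pi) := by linarith
    rw [this]
    exact circlePt_periodic.int_mul k t

instance factTwoPiPos : Fact ((0 : ℝ) < 2 * Real.pi) := ⟨Real.two_pi_pos⟩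

/-- The angle parametrization of the unit circle by `ℝ / 2πℤ`. -/
def angleToSph : AddCircle (2 * Real.pi) → Sph 2 := circlePt_periodic.lift

@[simp] lemma angleToSph_coe (t : ℝ) : angleToSph (t : AddCircle (2 * Real.pi)) = circlePt t :=
  rfl

lemma continuous_angleToSph : Continuous angleToSph :=
  continuous_coinduced_dom.2 lipschitzWith_circlePt.continuous

lemma bijective_angleToSph : Function.Bijective angleToSph := by
  constructor
  · intro a b
    induction a using QuotientAddGroup.induction_on
    induction b using QuotientAddGroup.induction_on
    exact fun h => circlePt_eq_iff.1 h
  · intro p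
    obtain ⟨t, rfl⟩ := circlePt_surjective p
    exact ⟨t, rfl⟩

/-- The homeomorphism between `ℝ / 2πℤ` and the unit circle. -/
def angleHomeo : AddCircle (2 * Real.pi) ≃ₜ Sph 2 :=
  continuous_angleToSph.homeoOfEquivCompactToT2
    (f := Equiv.ofBijective angleToSph bijective_angleToSph)

lemma angleHomeo_coe (t : ℝ) : angleHomeo (t : AddCircle (2 * Real.pi)) = circlePt t :=
  rfl

lemma dist_angleHomeo_add (a s t : AddCircle (2 * Real.pi)) :
    dist (angleHomeo (a + s)) (angleHomeo (a + t)) = dist (angleHomeo s) (angleHomeo t) := by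
  induction a using QuotientAddGroup.induction_on with | _ a
  induction s using QuotientAddGroup.induction_on with | _ s
  induction t using QuotientAddGroup.induction_on with | _ t
  rw [← sq_eq_sq₀ dist_nonneg dist_nonneg]
  have h := dist_circlePt_sq (a + s) (a + t)
  rw [add_sub_add_left_eq_sub, ← dist_circlePt_sq] at h
  exact h

/-- The rotation of the unit circle by a given angle. -/
def circleRotation (a : AddCircle (2 * Real.pi)) : Sph 2 ≃ᵢ Sph 2 where
  toEquiv := (angleHomeo.symm.toEquiv.trans (Equiv.addLeft a)).trans angleHomeo.toEquiv
  isometry_toFun := by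
    refine Isometry.of_dist_eq fun x y => ?_
    simp [dist_angleHomeo_add]

lemma sphMeasure_two_univ_lt_top : sphMeasure 2 Set.univ < ⊤ := by
  have h : (Set.univ : Set (Sph 2)) ⊆ circlePt '' Set.Icc 0 (2 * Real.pi) := by
    intro p _
    obtain ⟨t, rfl⟩ := circlePt_surjective p
    obtain ⟨y, hy, h⟩ := circlePt_periodic.exists_mem_Ico₀ Real.two_pi_pos t
    exact ⟨y, ⟨hy.1, hy.2.le⟩, h.symm⟩
  refine (measure_mono h).trans_lt ?_
  have h1 : ((2 : ℕ) : ℝ) - 1 = 1 := by norm_num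
  rw [sphMeasure, h1]
  refine (lipschitzWith_circlePt.hausdorffMeasure_image_le zero_le_one _).trans_lt ?_
  rw [hausdorffMeasure_real]
  simp [ENNReal.mul_lt_top_iff]

instance : IsFiniteMeasure (sphMeasure 2) := ⟨sphMeasure_two_univ_lt_top⟩

/-- The surface measure of the circle read in the angle coordinate. -/
def angleMeasure : Measure (AddCircle (2 * Real.pi)) := (sphMeasure 2).map angleHomeo.symm

instance : IsFiniteMeasure angleMeasure := by
  unfold angleMeasure; infer_instance

instance : angleMeasure.IsAddLeftInvariant := by
  constructor
  intro a
  have h := (IsometryEquiv.measurePreserving_hausdorffMeasure (circleRotation a)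
    (((2 : ℕ) : ℝ) - 1)).map_eq
  have hm := angleHomeo.symm.continuous.measurable
  rw [angleMeasure, Measure.map_map (measurable_const_add a) hm]
  have : (fun x => a + x) ∘ angleHomeo.symm = angleHomeo.symm ∘ circleRotation a := by
    ext x
    simp [circleRotation]
  rw [this, ← Measure.map_map hm (circleRotation a).continuous.measurable]
  congr 1

/-- Integration over the unit circle is, up to a nonnegative factor, integration in the angle. -/
lemma exists_integral_sphMeasure_two :
    ∃ c : ℝ, 0 ≤ c ∧ ∀ F : Sph 2 → ℝ,
      ∫ σ, F σ ∂(sphMeasure 2) = c * ∫ t in (0)..(2 * Real.pi), F (circlePt t) := by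
  obtain ⟨c, hc⟩ : ∃ c : NNReal,
      angleMeasure = c • (volume : Measure (AddCircle (2 * Real.pi))) :=
    ⟨_, Measure.isAddLeftInvariant_eq_smul angleMeasure volume⟩
  refine ⟨c, c.coe_nonneg, fun F => ?_⟩
  have h : ∫ σ, F σ ∂(sphMeasure 2) = ∫ t, F (angleHomeo t) ∂angleMeasure := by
    rw [angleMeasure, angleHomeo.symm.isClosedEmbedding.measurableEmbedding.integral_map]
    simp
  rw [h, hc, integral_smul_nnreal_measure, ← AddCircle.intervalIntegral_preimage _ 0]
  simp [angleHomeo_coe, NNReal.smul_def]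

lemma contDiff_circlePt {n : WithTop ℕ∞} : ContDiff ℝ n fun t => (circlePt t : E 2) := by
  rw [contDiff_euclidean]
  intro i
  fin_cases i
  · exact Real.contDiff_cos
  · exact Real.contDiff_sin

lemma homogExt_coe {d : ℕ} (F : Sph d → ℝ) (σ : Sph d) : homogExt F (σ : E d) = F σ := by
  have h : (σ : E d) ≠ 0 := ne_zero_of_mem_unit_sphere σ
  simp [homogExt, h]

lemma SphSmooth.contDiff_comp_circlePt {F : Sph 2 → ℝ} (hF : SphSmooth F) :
    ContDiff ℝ (⊤ : ℕ∞) fun t => F (circlePt t) := by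
  have h := hF.comp_contDiff contDiff_circlePt fun t => ne_zero_of_mem_unit_sphere (circlePt t)
  simpa only [Function.comp_def, homogExt_coe] using h

lemma homogExt_eq_of_inner_pos (F : Sph 2 → ℝ) (θ : ℝ) {x : E 2}
    (hx : 0 < ⟪(circlePt θ : E 2), x⟫) :
    homogExt F x = F (circlePt (θ + Real.arctan
      (⟪(circlePt (θ + Real.pi / 2) : E 2), x⟫ / ⟪(circlePt θ : E 2), x⟫))) := by
  have hx0 : x ≠ 0 := by
    rintro rfl
    simp at hx
  rw [homogExt, dif_neg hx0]
  congr 1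
  set a := ⟪(circlePt θ : E 2), x⟫ with ha
  set b := ⟪(circlePt (θ + Real.pi / 2) : E 2), x⟫ with hb
  have ha' : a = Real.cos θ * x 0 + Real.sin θ * x 1 := by
    rw [ha]
    simp [PiLp.inner_apply, Fin.sum_univ_two]
    ring
  have hb' : b = -Real.sin θ * x 0 + Real.cos θ * x 1 := by
    rw [hb]
    simp [PiLp.inner_apply, Fin.sum_univ_two, Real.cos_add_pi_div_two, Real.sin_add_pi_div_two]
    ring
  have hsc := Real.sin_sq_add_cos_sq θ
  have hx0' : x 0 = Real.cos θ * a - Real.sin θ * b := by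
    rw [ha', hb']; linear_combination (-x 0) * hsc
  have hx1' : x 1 = Real.sin θ * a + Real.cos θ * b := by
    rw [ha', hb']; linear_combination (-x 1) * hsc
  have hn : ‖x‖ = a * √(1 + (b / a) ^ 2) := by
    rw [EuclideanSpace.norm_eq, ← sq_eq_sq₀ (by positivity) (by positivity),
      Real.sq_sqrt (by positivity), mul_pow, Real.sq_sqrt (by positivity)]
    simp only [Real.norm_eq_abs, sq_abs, Fin.sum_univ_two, hx0', hx1']
    field_simp
    linear_combination (a ^ 2 + b ^ 2) * hsc
  have hs : √(1 + (b / a) ^ 2) ≠ 0 := by positivity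
  ext i
  fin_cases i
  · simp only [Fin.zero_eta, PiLp.smul_apply, circlePt_apply_zero, Real.cos_add,
      Real.cos_arctan, Real.sin_arctan, hn, hx0', smul_eq_mul]
    field_simp
  · simp only [Fin.mk_one, PiLp.smul_apply, circlePt_apply_one, Real.sin_add,
      Real.cos_arctan, Real.sin_arctan, hn, hx1', smul_eq_mul]
    field_simp

lemma hasGradientAt_homogExt {F : Sph 2 → ℝ} {θ d : ℝ}
    (h : HasDerivAt (fun t => F (circlePt t)) d θ) :
    HasGradientAt (homogExt F) (d • (circlePt (θ + Real.pi / 2) : E 2)) (circlePt θ : E 2) := by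
  have h2 : ⟪(circlePt (θ + Real.pi / 2) : E 2), (circlePt θ : E 2)⟫ = 0 := by
    simp [inner_circlePt]
  have hinner (v x : E 2) : HasFDerivAt (fun y : E 2 => ⟪v, y⟫) (innerSL ℝ v) x :=
    (innerSL ℝ v).hasFDerivAt
  have hinv := hasDerivAt_inv (x := ⟪(circlePt θ : E 2), (circlePt θ : E 2)⟫) (by simp)
  have hφ := (((hinner (circlePt (θ + Real.pi / 2)) (circlePt θ)).fun_mul
    (hinv.comp_hasFDerivAt (circlePt θ : E 2)
      (hinner (circlePt θ) (circlePt θ)))).arctan).const_add θ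
  have hF := HasDerivAt.comp_hasFDerivAt (circlePt θ : E 2) (h₂ := fun t => F (circlePt t))
    (h₂' := d) (by simpa [h2] using h) hφ
  rw [hasGradientAt_iff_hasFDerivAt]
  have hev : ∀ᶠ x in nhds (circlePt θ : E 2), 0 < ⟪(circlePt θ : E 2), x⟫ := by
    have : Continuous fun x : E 2 => ⟪(circlePt θ : E 2), x⟫ := by fun_prop
    exact this.continuousAt.eventually (lt_mem_nhds (by simp))
  refine (hF.congr_of_eventuallyEq
    (hev.mono fun x hx => by
      simpa [div_eq_mul_inv] using homogExt_eq_of_inner_pos F θ hx)).congr_fderiv ?_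
  ext v
  simp [h2]

lemma sphGrad_circlePt {F : Sph 2 → ℝ} {θ d : ℝ}
    (h : HasDerivAt (fun t => F (circlePt t)) d θ) :
    sphGrad F (circlePt θ) = d • (circlePt (θ + Real.pi / 2) : E 2) :=
  (hasGradientAt_homogExt h).gradient

lemma Function.Periodic.intervalIntegral_mul_comp_sub {ψ k : ℝ → ℝ} {T : ℝ}
    (hψ : Function.Periodic ψ T) (hk : Function.Periodic k T) (a : ℝ) :
    ∫ s in (0)..T, ψ s * k (s - a) = ∫ s in (0)..T, ψ (a + s) * k s := by
  have hw : Function.Periodic (fun s => ψ s * k (s - a)) T := by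
    intro s
    simp only [hψ s, add_sub_right_comm, hk (s - a)]
  have h1 := hw.intervalIntegral_add_eq 0 a
  have h2 := intervalIntegral.integral_comp_add_left (a := 0) (b := T)
    (fun s => ψ s * k (s - a)) a
  simp only [add_sub_cancel_left, add_zero, zero_add] at h1 h2
  rw [h1, ← h2]

lemma Function.Periodic.deriv {g : ℝ → ℝ} {T : ℝ} (hg : Function.Periodic g T) :
    Function.Periodic (_root_.deriv g) T := by
  intro t
  rw [← deriv_comp_add_const]
  congr 1
  exact funext hg

lemma hasDerivAt_integral_sub_mul {g k : ℝ → ℝ} {T : ℝ} (hT : T ≠ 0) (hg : ContDiff ℝ 1 g)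
    (hgp : Function.Periodic g T) (hk : Continuous k) (θ : ℝ) :
    HasDerivAt (fun t => ∫ s in (0)..T, (g (t + s) - g t) * k s)
      (∫ s in (0)..T, (deriv g (θ + s) - deriv g θ) * k s) θ := by
  have hg' : Continuous (deriv g) := hg.continuous_deriv le_rfl
  have hgc := hg.continuous
  obtain ⟨M, hM⟩ := (hgp.deriv.isBounded_of_continuous hT hg').exists_norm_le
  simp only [Set.forall_mem_range] at hM
  have hd (t : ℝ) : HasDerivAt g (deriv g t) t :=
    (hg.differentiable one_ne_zero t).hasDerivAt
  refine (intervalIntegral.hasDerivAt_integral_of_dominated_loc_of_deriv_le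
    (F := fun t s => (g (t + s) - g t) * k s)
    (F' := fun t s => (deriv g (t + s) - deriv g t) * k s)
    (bound := fun s => (M + M) * ‖k s‖) (s := Set.univ) Filter.univ_mem
    (Filter.Eventually.of_forall fun t => ?_) ?_ ?_ ?_ ?_ ?_).2
  · exact Continuous.aestronglyMeasurable (by fun_prop)
  · exact Continuous.intervalIntegrable (by fun_prop) _ _
  · exact Continuous.aestronglyMeasurable (by fun_prop)
  · refine Filter.Eventually.of_forall fun s _ t _ => ?_
    rw [norm_mul]
    gcongr
    exact (norm_sub_le _ _).trans (add_le_add (hM _) (hM _))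
  · exact Continuous.intervalIntegrable (by fun_prop) _ _
  · exact Filter.Eventually.of_forall fun s _ t _ =>
      (((hd (t + s)).comp_add_const t s).sub (hd t)).mul_const (k s)

/-- In the angle coordinate, `Γ²_{𝓑,Δ}` is the carré du champ of `𝓑` applied to the derivative. -/
lemma Gamma2BD_circlePt {c : ℝ}
    (hc : ∀ F : Sph 2 → ℝ,
      ∫ σ, F σ ∂(sphMeasure 2) = c * ∫ t in (0)..(2 * Real.pi), F (circlePt t))
    {b : ℝ → ℝ} (hb : Continuous fun t => b (Real.cos t)) {G : Sph 2 → ℝ} {g : ℝ → ℝ}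
    (hG : ∀ t, G (circlePt t) = g t) (hg : ContDiff ℝ 1 g) (θ : ℝ) :
    Gamma2BD b G (circlePt θ) = c / 2 *
      ∫ s in (0)..(2 * Real.pi), (deriv g s - deriv g θ) ^ 2 * b (Real.cos (s - θ)) := by
  have hgp : Function.Periodic g (2 * Real.pi) := by
    intro t
    rw [← hG, ← hG, circlePt_periodic t]
  have hkp : Function.Periodic (fun t => b (Real.cos t)) (2 * Real.pi) := by
    intro t
    simp only [Real.cos_periodic t]
  have hg' : Continuous (deriv g) := hg.continuous_deriv le_rfl
  have hgrad (t : ℝ) : sphGrad G (circlePt t)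
      = deriv g t • (circlePt (t + Real.pi / 2) : E 2) := by
    refine sphGrad_circlePt ?_
    simp only [hG]
    exact (hg.differentiable one_ne_zero t).hasDerivAt
  have hB (F : Sph 2 → ℝ) (t : ℝ) : sphB b F (circlePt t) = c * ∫ s in (0)..(2 * Real.pi),
      (F (circlePt s) - F (circlePt t)) * b (Real.cos (s - t)) := by
    rw [sphB, hc]
    simp only [inner_circlePt]
  have hBg (t : ℝ) : sphB b G (circlePt t) = c * ∫ s in (0)..(2 * Real.pi),
      (g (t + s) - g t) * b (Real.cos s) := by
    rw [hB]
    simp only [hG]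
    congr 1
    refine Function.Periodic.intervalIntegral_mul_comp_sub (ψ := fun s => g s - g t)
      (k := fun s => b (Real.cos s)) (fun s => ?_) hkp t
    simp only [hgp s]
  have hgradB : sphGrad (fun τ => sphB b G τ) (circlePt θ)
      = (c * ∫ s in (0)..(2 * Real.pi), (deriv g s - deriv g θ) * b (Real.cos (s - θ))) •
        (circlePt (θ + Real.pi / 2) : E 2) := by
    refine sphGrad_circlePt ?_
    simp only [hBg]
    rw [Function.Periodic.intervalIntegral_mul_comp_sub (ψ := fun s => deriv g s - deriv g θ)
      (k := fun s => b (Real.cos s)) (fun s => by simp only [hgp.deriv s]) hkp θ]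
    exact (hasDerivAt_integral_sub_mul Real.two_pi_pos.ne' hg hgp hb θ).const_mul c
  have hkc : Continuous fun s => b (Real.cos (s - θ)) := hb.comp (continuous_sub_right θ)
  have hint : ∫ s in (0)..(2 * Real.pi), (deriv g s - deriv g θ) ^ 2 * b (Real.cos (s - θ))
      = (∫ s in (0)..(2 * Real.pi), (deriv g s ^ 2 - deriv g θ ^ 2) * b (Real.cos (s - θ)))
        - 2 * deriv g θ *
          ∫ s in (0)..(2 * Real.pi), (deriv g s - deriv g θ) * b (Real.cos (s - θ)) := by
    rw [← intervalIntegral.integral_const_mul, ← intervalIntegral.integral_sub]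
    · refine intervalIntegral.integral_congr fun s _ => ?_
      ring
    · exact (((hg'.pow 2).sub continuous_const).mul hkc).intervalIntegrable _ _
    · exact (((hg'.sub continuous_const).mul hkc).const_mul _).intervalIntegrable _ _
  rw [Gamma2BD, hB, hgradB, hint]
  simp only [hgrad, norm_smul, norm_eq_of_mem_sphere, mul_one, Real.norm_eq_abs, sq_abs,
    inner_smul_left, inner_smul_right, inner_circlePt, sub_self, Real.cos_zero, conj_trivial]
  ring

/-- **Wirtinger's inequality** for functions taking the same value at both endpoints. -/
lemma wirtinger_inequality {a b : ℝ} (hab : a < b) {h h' : ℝ → ℝ}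
    (hd : ∀ x, HasDerivAt h (h' x) x) (hc : Continuous h') (hp : h b = h a) :
    (2 * Real.pi / (b - a)) ^ 2 *
        ((∫ x in a..b, h x ^ 2) - (b - a)⁻¹ * (∫ x in a..b, h x) ^ 2)
      ≤ ∫ x in a..b, h' x ^ 2 := by
  have hL : 0 < b - a := sub_pos.2 hab
  have hparseval (u : ℝ → ℝ) (hu : Continuous u) :
      HasSum (fun i => ‖fourierCoeffOn hab (fun x => (u x : ℂ)) i‖ ^ 2)
        ((b - a)⁻¹ * ∫ x in a..b, u x ^ 2) := by
    have hu' : Continuous fun x => (u x : ℂ) := Complex.continuous_ofReal.comp hu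
    have hm : MemLp (fun x => (u x : ℂ)) 2 (volume.restrict (Set.Ioc a b)) := by
      obtain ⟨C, hC⟩ := isCompact_Icc.exists_bound_of_continuousOn
        (s := Set.Icc a b) hu'.continuousOn
      exact MemLp.of_bound hu'.aestronglyMeasurable C
        ((ae_restrict_iff' measurableSet_Ioc).2
          (Filter.Eventually.of_forall fun x hx => hC x (Set.Ioc_subset_Icc_self hx)))
    simpa using hasSum_sq_fourierCoeffOn hab hm
  have hcont : Continuous h := continuous_iff_continuousAt.2 fun x => (hd x).continuousAt
  have hzero : ‖fourierCoeffOn hab (fun x => (h x : ℂ)) 0‖ ^ 2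
      = ((b - a)⁻¹ * ∫ x in a..b, h x) ^ 2 := by
    rw [fourierCoeffOn_eq_integral]
    simp only [neg_zero, fourier_zero, one_smul, intervalIntegral.integral_ofReal]
    rw [norm_smul, Complex.norm_real, mul_pow, mul_pow]
    simp
  have hcoeff (n : ℤ) (hn : n ≠ 0) :
      (2 * Real.pi / (b - a)) ^ 2 * ‖fourierCoeffOn hab (fun x => (h x : ℂ)) n‖ ^ 2
        ≤ ‖fourierCoeffOn hab (fun x => (h' x : ℂ)) n‖ ^ 2 := by
    have key := fourierCoeffOn_of_hasDerivAt hab hn (f := fun x => (h x : ℂ))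
      (f' := fun x => (h' x : ℂ)) (fun x _ => (hd x).ofReal_comp)
      ((Complex.continuous_ofReal.comp hc).intervalIntegrable _ _)
    have hn1 : (1 : ℝ) ≤ |(n : ℝ)| := by exact_mod_cast Int.one_le_abs hn
    rw [hp, sub_self, mul_zero, zero_sub] at key
    rw [key, ← mul_pow]
    have hL' : ‖(b : ℂ) - a‖ = b - a := by
      rw [← Complex.ofReal_sub, Complex.norm_real, Real.norm_of_nonneg hL.le]
    have hpi := Real.pi_pos
    simp only [norm_mul, norm_neg, norm_div, norm_one, hL', Complex.norm_I, Complex.norm_real,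
      Complex.norm_intCast, Complex.norm_ofNat, Real.norm_of_nonneg hpi.le]
    gcongr
    rw [mul_one, ← mul_assoc, ← mul_assoc]
    refine mul_le_of_le_one_left (norm_nonneg _) ?_
    field_simp
    exact hn1
  have hs := (hparseval h hcont).update 0 0
  have hle := hasSum_le (fun n => ?_) (hs.mul_left ((2 * Real.pi / (b - a)) ^ 2))
    (hparseval h' hc)
  · rw [hzero] at hle
    have h2 := mul_le_mul_of_nonneg_left hle hL.le
    rw [mul_inv_cancel_left₀ hL.ne'] at h2
    refine le_of_eq_of_le ?_ h2
    field_simp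
    ring
  · by_cases hn : n = 0
    · subst hn
      simp
    · rw [Function.update_of_ne hn]
      exact hcoeff n hn

lemma sqrt_one_sub_add_sqrt_one_add_mem {x : ℝ} (hx : x ∈ Set.Icc (-1) 1) :
    √(1 - x) + √(1 + x) ∈ Set.Icc √2 2 := by
  have h1 := Real.sq_sqrt (sub_nonneg.2 hx.2)
  have h2 := Real.sq_sqrt (neg_le_iff_add_nonneg'.1 hx.1)
  have h3 := Real.sqrt_nonneg (1 - x)
  have h4 := Real.sqrt_nonneg (1 + x)
  constructor
  · refine Real.sqrt_le_iff.2 ⟨by positivity, ?_⟩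
    nlinarith [mul_nonneg h3 h4]
  · nlinarith [sq_nonneg (√(1 - x) - √(1 + x))]

/-- For `π`-periodic functions the planar hard-sphere kernel is comparable to a constant. -/
lemma integral_mul_hardSphere_bounds {ψ : ℝ → ℝ} (hψ : Continuous ψ) (hψ0 : ∀ s, 0 ≤ ψ s)
    (hp : Function.Periodic ψ Real.pi) (t : ℝ) :
    √2 / 4 * (∫ s in (0)..(2 * Real.pi), ψ s)
        ≤ ∫ s in (0)..(2 * Real.pi), ψ s * (1 / 2 * √(1 - Real.cos (s - t))) ∧
      ∫ s in (0)..(2 * Real.pi), ψ s * (1 / 2 * √(1 - Real.cos (s - t)))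
        ≤ 1 / 2 * ∫ s in (0)..(2 * Real.pi), ψ s := by
  have hp2 : Function.Periodic ψ (2 * Real.pi) := by simpa using hp.nat_mul 2
  have hkp : Function.Periodic (fun s => 1 / 2 * √(1 - Real.cos s)) (2 * Real.pi) := by
    intro s
    simp only [Real.cos_periodic s]
  have h1 := hp2.intervalIntegral_mul_comp_sub hkp t
  have h2 := hp2.intervalIntegral_mul_comp_sub hkp (t - Real.pi)
  have h3 : ∀ s, ψ (t - Real.pi + s) = ψ (t + s) := fun s => by
    rw [← hp (t - Real.pi + s)]
    ring_nf
  have h4 : ∀ s, Real.cos (s - (t - Real.pi)) = -Real.cos (s - t) := fun s => by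
    rw [← Real.cos_add_pi]
    ring_nf
  simp only [h3, h4, sub_neg_eq_add] at h1 h2
  have h5 : ∫ s in (0)..(2 * Real.pi), ψ s * (1 / 2 * √(1 - Real.cos (s - t)))
      = ∫ s in (0)..(2 * Real.pi),
        ψ s * (1 / 4 * (√(1 - Real.cos (s - t)) + √(1 + Real.cos (s - t)))) := by
    have h6 : ∫ s in (0)..(2 * Real.pi), ψ s * (1 / 2 * √(1 - Real.cos (s - t)))
        = 1 / 2 * ((∫ s in (0)..(2 * Real.pi), ψ s * (1 / 2 * √(1 - Real.cos (s - t))))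
          + ∫ s in (0)..(2 * Real.pi), ψ s * (1 / 2 * √(1 + Real.cos (s - t)))) := by
      rw [h2, ← h1]
      ring
    rw [h6, ← intervalIntegral.integral_add, ← intervalIntegral.integral_const_mul]
    · refine intervalIntegral.integral_congr fun s _ => ?_
      ring
    · exact Continuous.intervalIntegrable (by fun_prop) _ _
    · exact Continuous.intervalIntegrable (by fun_prop) _ _
  have hmem (s : ℝ) := sqrt_one_sub_add_sqrt_one_add_mem (Real.cos_mem_Icc (s - t))
  rw [h5, ← intervalIntegral.integral_const_mul, ← intervalIntegral.integral_const_mul]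
  constructor <;>
  · refine intervalIntegral.integral_mono_on Real.two_pi_pos.le
      (Continuous.intervalIntegrable (by fun_prop) _ _)
      (Continuous.intervalIntegrable (by fun_prop) _ _) fun s _ => ?_
    nlinarith [hψ0 s, (hmem s).1, (hmem s).2]

lemma sq_sub_div_add_le {x y : ℝ} (hx : 0 < x) (hy : 0 < y) :
    (x - y) ^ 2 / (x + y) ≤ 2 * (√x - √y) ^ 2 := by
  obtain ⟨u, hu, rfl⟩ : ∃ u, 0 < u ∧ x = u ^ 2 :=
    ⟨√x, Real.sqrt_pos.2 hx, (Real.sq_sqrt hx.le).symm⟩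
  obtain ⟨v, hv, rfl⟩ : ∃ v, 0 < v ∧ y = v ^ 2 :=
    ⟨√y, Real.sqrt_pos.2 hy, (Real.sq_sqrt hy.le).symm⟩
  rw [Real.sqrt_sq hu.le, Real.sqrt_sq hv.le, div_le_iff₀ (by positivity)]
  nlinarith [mul_nonneg (sq_nonneg (u - v)) (sq_nonneg (u - v))]

lemma Function.Periodic.intervalIntegral_two_mul {u : ℝ → ℝ} {T : ℝ}
    (hu : Function.Periodic u T) (hc : Continuous u) :
    ∫ s in (0)..(2 * T), u s = 2 * ∫ s in (0)..T, u s := by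
  have h := hu.intervalIntegral_add_eq_add 0 T fun a b => hc.intervalIntegrable a b
  rw [zero_add, ← two_mul] at h
  rw [h, ← two_mul]

lemma integral_integral_sq_sub {a b : ℝ} {h : ℝ → ℝ} (hc : Continuous h) :
    ∫ t in a..b, ∫ s in a..b, (h s - h t) ^ 2
      = 2 * (b - a) * (∫ t in a..b, h t ^ 2) - 2 * (∫ t in a..b, h t) ^ 2 := by
  have hi (t : ℝ) : ∫ s in a..b, (h s - h t) ^ 2
      = (∫ s in a..b, h s ^ 2) + (-2 * ∫ s in a..b, h s) * h t + (b - a) * h t ^ 2 := by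
    have : ∀ s, (h s - h t) ^ 2 = h s ^ 2 + (-2 * h t) * h s + h t ^ 2 := fun s => by ring
    simp only [this]
    rw [intervalIntegral.integral_add, intervalIntegral.integral_add,
      intervalIntegral.integral_const_mul, intervalIntegral.integral_const, smul_eq_mul]
    · ring
    all_goals exact Continuous.intervalIntegrable (by fun_prop) _ _
  simp only [hi]
  rw [intervalIntegral.integral_add, intervalIntegral.integral_add,
    intervalIntegral.integral_const_mul, intervalIntegral.integral_const_mul,
    intervalIntegral.integral_const, smul_eq_mul]
  · ring
  all_goals exact Continuous.intervalIntegrable (by fun_prop) _ _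

/-- The Poincaré inequality on the circle for `π`-periodic functions, in two-point form. -/
lemma integral_integral_sq_sub_le {h : ℝ → ℝ} (hh : ContDiff ℝ 1 h)
    (hp : Function.Periodic h Real.pi) :
    ∫ t in (0)..(2 * Real.pi), ∫ s in (0)..(2 * Real.pi), (h s - h t) ^ 2
      ≤ Real.pi * ∫ t in (0)..(2 * Real.pi), deriv h t ^ 2 := by
  have hc := hh.continuous
  have hc' : Continuous (deriv h) := hh.continuous_deriv le_rfl
  have hw := wirtinger_inequality Real.pi_pos
    (fun x => (hh.differentiable one_ne_zero x).hasDerivAt) hc' (by simpa using hp 0)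
  rw [integral_integral_sq_sub hc, hp.intervalIntegral_two_mul hc,
    Function.Periodic.intervalIntegral_two_mul (u := fun t => h t ^ 2)
      (fun t => by simp only [hp t]) (hc.pow 2),
    Function.Periodic.intervalIntegral_two_mul (u := fun t => deriv h t ^ 2)
      (fun t => by simp only [hp.deriv t]) (hc'.pow 2)]
  have hpi := Real.pi_pos
  rw [sub_zero, mul_div_cancel_right₀ _ hpi.ne'] at hw
  have h2 := mul_le_mul_of_nonneg_left hw (by positivity : 0 ≤ 2 * Real.pi)
  refine le_trans (le_of_eq ?_) (h2.trans (le_of_eq ?_))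
  · field_simp
    ring
  · ring

/-- The inequality `LS(√2, b)` for the planar hard-sphere kernel, in the angle coordinate. -/
lemma hardSphere_logSobolev_angle {f : ℝ → ℝ} (hf : ContDiff ℝ 1 f) (hf0 : ∀ t, 0 < f t)
    (hp : Function.Periodic f Real.pi) :
    √2 * (∫ t in (0)..(2 * Real.pi), ∫ s in (0)..(2 * Real.pi),
        (f s - f t) ^ 2 / (f s + f t) * (1 / 2 * √(1 - Real.cos (s - t))))
      ≤ ∫ t in (0)..(2 * Real.pi), 1 / 2 * (∫ s in (0)..(2 * Real.pi),
        (deriv (fun u => Real.log (f u)) s - deriv (fun u => Real.log (f u)) t) ^ 2 *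
          (1 / 2 * √(1 - Real.cos (s - t)))) * f t := by
  have hpi := Real.pi_pos
  have hc := hf.continuous
  have hg : ContDiff ℝ 1 fun u => Real.log (f u) := hf.log fun t => (hf0 t).ne'
  have hh : ContDiff ℝ 1 fun u => √(f u) := hf.sqrt fun t => (hf0 t).ne'
  have hgp : Function.Periodic (fun u => Real.log (f u)) Real.pi := fun t => by simp only [hp t]
  have hhp : Function.Periodic (fun u => √(f u)) Real.pi := fun t => by simp only [hp t]
  have hgh (t : ℝ) : deriv (fun u => Real.log (f u)) t ^ 2 * f t
      = 4 * deriv (fun u => √(f u)) t ^ 2 := by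
    have hd := hf.differentiable one_ne_zero t
    rw [deriv.log hd (hf0 t).ne', deriv_sqrt hd (hf0 t).ne', div_pow, div_pow, mul_pow,
      Real.sq_sqrt (hf0 t).le]
    have := hf0 t
    field_simp
    ring
  have hpc : Continuous (deriv fun u => Real.log (f u)) := hg.continuous_deriv le_rfl
  have hpp := hgp.deriv
  have hp0 : ∫ s in (0)..(2 * Real.pi), deriv (fun u => Real.log (f u)) s = 0 := by
    rw [intervalIntegral.integral_deriv_eq_sub
      (fun t _ => hg.differentiable one_ne_zero t) (hpc.intervalIntegrable _ _)]
    have := hp.nat_mul 2 0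
    simp only [Nat.cast_ofNat, zero_add] at this
    rw [this, sub_self]
  have hcd := hh.continuous_deriv le_rfl
  set p := deriv fun u => Real.log (f u)
  set h := fun u => √(f u) with hdef
  have hhc : Continuous h := hh.continuous
  have hupper (t : ℝ) : ∫ s in (0)..(2 * Real.pi),
      (f s - f t) ^ 2 / (f s + f t) * (1 / 2 * √(1 - Real.cos (s - t)))
        ≤ ∫ s in (0)..(2 * Real.pi), (h s - h t) ^ 2 := by
    have hψ : Continuous fun s => (f s - f t) ^ 2 / (f s + f t) :=
      Continuous.div (by fun_prop) (by fun_prop) fun s => (add_pos (hf0 s) (hf0 t)).ne'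
    refine (integral_mul_hardSphere_bounds hψ
      (fun s => div_nonneg (sq_nonneg _) (add_pos (hf0 s) (hf0 t)).le)
      (fun s => by simp only [hp s]) t).2.trans ?_
    rw [← intervalIntegral.integral_const_mul]
    refine intervalIntegral.integral_mono_on (by positivity)
      (Continuous.intervalIntegrable (by fun_prop) _ _)
      (Continuous.intervalIntegrable (by fun_prop) _ _) fun s _ => ?_
    linarith [sq_sub_div_add_le (hf0 s) (hf0 t)]
  have hlower (t : ℝ) : √2 * Real.pi * deriv h t ^ 2 ≤ 1 / 2 * (∫ s in (0)..(2 * Real.pi),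
      (p s - p t) ^ 2 * (1 / 2 * √(1 - Real.cos (s - t)))) * f t := by
    have h1 := (integral_mul_hardSphere_bounds (ψ := fun s => (p s - p t) ^ 2) (by fun_prop)
      (fun s => sq_nonneg _) (fun s => by simp only [hpp s]) t).1
    have h2 : 2 * Real.pi * p t ^ 2 ≤ ∫ s in (0)..(2 * Real.pi), (p s - p t) ^ 2 := by
      have h3 : ∫ s in (0)..(2 * Real.pi), (p t ^ 2 - 2 * p t * p s) = 2 * Real.pi * p t ^ 2 := by
        rw [intervalIntegral.integral_sub (by simp)
            (Continuous.intervalIntegrable (by fun_prop) _ _),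
          intervalIntegral.integral_const_mul, hp0, intervalIntegral.integral_const]
        simp
      rw [← h3]
      refine intervalIntegral.integral_mono_on (by positivity)
        (Continuous.intervalIntegrable (by fun_prop) _ _)
        (Continuous.intervalIntegrable (by fun_prop) _ _) fun s _ => ?_
      nlinarith [sq_nonneg (p s)]
    calc √2 * Real.pi * deriv h t ^ 2
        = 1 / 2 * (√2 / 4 * (2 * Real.pi * p t ^ 2)) * f t := by
          linear_combination (-(√2 * Real.pi / 4)) * hgh t
      _ ≤ _ := by
          have := (hf0 t).le
          gcongr
          exact (mul_le_mul_of_nonneg_left h2 (by positivity)).trans h1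
  have hcont1 : Continuous fun t => ∫ s in (0)..(2 * Real.pi),
      (f s - f t) ^ 2 / (f s + f t) * (1 / 2 * √(1 - Real.cos (s - t))) := by
    refine intervalIntegral.continuous_parametric_intervalIntegral_of_continuous' ?_ _ _
    refine Continuous.mul (Continuous.div (by fun_prop) (by fun_prop) fun q =>
      (add_pos (hf0 q.2) (hf0 q.1)).ne') (by fun_prop)
  have hcont2 : Continuous fun t => ∫ s in (0)..(2 * Real.pi), (h s - h t) ^ 2 := by
    refine intervalIntegral.continuous_parametric_intervalIntegral_of_continuous' ?_ _ _
    fun_prop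
  have hcont3 : Continuous fun t => ∫ s in (0)..(2 * Real.pi),
      (p s - p t) ^ 2 * (1 / 2 * √(1 - Real.cos (s - t))) := by
    refine intervalIntegral.continuous_parametric_intervalIntegral_of_continuous' ?_ _ _
    fun_prop
  calc √2 * (∫ t in (0)..(2 * Real.pi), ∫ s in (0)..(2 * Real.pi),
        (f s - f t) ^ 2 / (f s + f t) * (1 / 2 * √(1 - Real.cos (s - t))))
      ≤ √2 * ∫ t in (0)..(2 * Real.pi), ∫ s in (0)..(2 * Real.pi), (h s - h t) ^ 2 := by
        gcongr
        exact intervalIntegral.integral_mono_on (by positivity) (hcont1.intervalIntegrable _ _)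
          (hcont2.intervalIntegrable _ _) fun t _ => hupper t
    _ ≤ √2 * (Real.pi * ∫ t in (0)..(2 * Real.pi), deriv h t ^ 2) := by
        gcongr
        exact integral_integral_sq_sub_le hh hhp
    _ = ∫ t in (0)..(2 * Real.pi), √2 * Real.pi * deriv h t ^ 2 := by
        rw [intervalIntegral.integral_const_mul, mul_assoc]
    _ ≤ _ := intervalIntegral.integral_mono_on (by positivity)
        (Continuous.intervalIntegrable (by fun_prop) _ _)
        (Continuous.intervalIntegrable (by fun_prop) _ _) fun t _ => hlower t

/-- For the planar hard-sphere kernel `b(c) = ½ √(1-c)` on the unit circle,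
the log-Sobolev inequality `LS(√2, b)` holds. -/
theorem logSobolev_planar_hard_spheres :
    LS 2 (fun c => (1 / 2) * Real.sqrt (1 - c)) (Real.sqrt 2) := by
  intro f hf hf0 hfe
  obtain ⟨c, hc0, hc⟩ := exists_integral_sphMeasure_two
  have hu : ContDiff ℝ 1 fun t => f (circlePt t) :=
    hf.contDiff_comp_circlePt.of_le (by exact_mod_cast le_top)
  have hu0 (t : ℝ) : 0 < f (circlePt t) := hf0 _
  have hup : Function.Periodic (fun t => f (circlePt t)) Real.pi := fun t => by
    simp only [circlePt_add_pi, hfe]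
  have key := mul_le_mul_of_nonneg_left (hardSphere_logSobolev_angle hu hu0 hup)
    (mul_nonneg hc0 hc0)
  have hΓ := Gamma2BD_circlePt (b := fun c => (1 / 2) * Real.sqrt (1 - c)) hc (by fun_prop)
    (G := fun τ => Real.log (f τ)) (fun _ => rfl) (hu.log fun t => (hu0 t).ne')
  simp only [hc, inner_circlePt, hΓ]
  refine le_trans (le_of_eq ?_) (key.trans (le_of_eq ?_))
  · rw [intervalIntegral.integral_const_mul]
    ring
  · rw [← intervalIntegral.integral_const_mul, ← intervalIntegral.integral_const_mul]
    refine intervalIntegral.integral_congr fun t _ => ?_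
    ring
end
end

section
/- Let d ≥ 2. For every smooth F : S^{d-1} → (0,∞) with F(−σ) = F(σ) for all σ, the following log-Sobolev-type inequality for the spherical Laplacian holds: (d + 3 − 1/(d−1)) · ∫_{S^{d-1}} |∇_σ log F|² F dσ ≤ ∫_{S^{d-1}} Γ²_{Δ,Δ}(log F, log F) F dσ. In particular the constant Λ_Δ := d + 3 − 1/(d−1) satisfies Λ_Δ > d. -/
open MeasureTheory
open scoped RealInnerProductSpace

noncomputable section

section Wirtinger

open Complex in
/-- Wirtinger's inequality for mean-zero periodic functions. -/
theorem wirtinger_inequality_s19 {h h' : ℝ → ℝ} (hd : ∀ t, HasDerivAt h (h' t) t)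
    (hc : Continuous h') (hper : h (2 * Real.pi) = h 0)
    (hmean : ∫ t in (0 : ℝ)..2 * Real.pi, h t = 0) :
    ∫ t in (0 : ℝ)..2 * Real.pi, h t ^ 2 ≤ ∫ t in (0 : ℝ)..2 * Real.pi, h' t ^ 2 := by
  have hpi : (0 : ℝ) < 2 * Real.pi := by positivity
  have hch : Continuous h := continuous_iff_continuousAt.2 fun t => (hd t).continuousAt
  have memLp : ∀ k : ℝ → ℝ, Continuous k →
      MemLp (fun t => (k t : ℂ)) 2 (volume.restrict (Set.Ioc 0 (2 * Real.pi))) := by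
    intro k hk
    have hk' : Continuous fun t => (k t : ℂ) := Complex.continuous_ofReal.comp hk
    obtain ⟨C, hC⟩ := isCompact_Icc.exists_bound_of_continuousOn
      (s := Set.Icc 0 (2 * Real.pi)) hk'.continuousOn
    refine MemLp.of_bound hk'.aestronglyMeasurable C ?_
    filter_upwards [ae_restrict_mem measurableSet_Ioc] with x hx
    exact hC x ⟨hx.1.le, hx.2⟩
  have s1 := hasSum_sq_fourierCoeffOn hpi (memLp h hch)
  have s2 := hasSum_sq_fourierCoeffOn hpi (memLp h' hc)
  have key : ∀ n : ℤ, ‖fourierCoeffOn hpi (fun t => (h t : ℂ)) n‖ ^ 2 ≤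
      ‖fourierCoeffOn hpi (fun t => (h' t : ℂ)) n‖ ^ 2 := by
    intro n
    rcases eq_or_ne n 0 with rfl | hn
    · have : fourierCoeffOn hpi (fun t => (h t : ℂ)) 0 = 0 := by
        rw [fourierCoeffOn_eq_integral]
        simp [intervalIntegral.integral_ofReal, hmean]
      rw [this]
      simp
    · have e := fourierCoeffOn_of_hasDerivAt (f := fun t => (h t : ℂ))
        (f' := fun t => (h' t : ℂ)) hpi hn (fun x _ => (hd x).ofReal_comp)
        ((Complex.continuous_ofReal.comp hc).intervalIntegrable _ _)
      rw [e, hper]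
      simp only [sub_self, mul_zero, zero_sub]
      have hn1 : (1 : ℝ) ≤ |(n : ℝ)| := by
        exact_mod_cast Int.one_le_abs hn
      gcongr
      rw [norm_mul, norm_neg, norm_mul]
      simp only [norm_div, norm_mul, norm_neg, norm_one, Complex.norm_I, Complex.norm_real,
        Complex.norm_intCast, Complex.norm_ofNat, ofReal_mul, ofReal_ofNat, ofReal_zero, sub_zero,
        Real.norm_eq_abs, abs_of_pos Real.pi_pos]
      rw [← mul_assoc]
      refine mul_le_of_le_one_left (norm_nonneg _) ?_
      rw [div_mul_eq_mul_div, one_mul, mul_one, div_le_one (by positivity)]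
      exact le_mul_of_one_le_right (by positivity) hn1
  have := hasSum_le key s1 s2
  simp only [sub_zero, smul_eq_mul, Complex.norm_real, Real.norm_eq_abs, sq_abs] at this
  exact le_of_mul_le_mul_left this (by positivity)

end Wirtinger

/-- Continuous functions of two variables on a compact space and an interval: Fubini. -/
theorem intervalIntegral_integral_swap_of_continuous {X : Type*} [TopologicalSpace X]
    [CompactSpace X] [T2Space X] [SecondCountableTopology X] [MeasurableSpace X] [BorelSpace X]
    (m : Measure X) [IsFiniteMeasure m] {f : ℝ → X → ℝ} (hf : Continuous (Function.uncurry f))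
    (a b : ℝ) :
    ∫ t in a..b, ∫ x, f t x ∂m = ∫ x, (∫ t in a..b, f t x) ∂m := by
  apply intervalIntegral_integral_swap
  have hK : IsCompact (Set.uIcc a b ×ˢ (Set.univ : Set X)) := isCompact_uIcc.prod isCompact_univ
  have h1 : IntegrableOn (Function.uncurry f) (Set.uIcc a b ×ˢ (Set.univ : Set X))
      (volume.prod m) := hf.continuousOn.integrableOn_compact hK
  rw [IntegrableOn, ← Measure.prod_restrict, Measure.restrict_univ] at h1
  exact h1.mono_measure
    (Measure.prod_mono (Measure.restrict_mono Set.uIoc_subset_uIcc le_rfl) le_rfl)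

section Rotation

variable {d : ℕ}

/-- The standard basis vectors of `ℝ^d`. -/
abbrev bv (i : Fin d) : E d := EuclideanSpace.single i 1

/-- Rotation by the angle `t` in the `(i, j)` coordinate plane. -/
def rotFun (i j : Fin d) (t : ℝ) (x : E d) : E d :=
  x + ((Real.cos t - 1) * x i - Real.sin t * x j) • bv i
    + ((Real.cos t - 1) * x j + Real.sin t * x i) • bv j

theorem rotFun_apply_left {i j : Fin d} (hij : i ≠ j) (t : ℝ) (x : E d) :
    rotFun i j t x i = Real.cos t * x i - Real.sin t * x j := by
  simp [rotFun, hij]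
  ring

theorem rotFun_apply_right {i j : Fin d} (hij : i ≠ j) (t : ℝ) (x : E d) :
    rotFun i j t x j = Real.cos t * x j + Real.sin t * x i := by
  simp [rotFun, hij.symm]
  ring

theorem norm_rotFun {i j : Fin d} (hij : i ≠ j) (t : ℝ) (x : E d) :
    ‖rotFun i j t x‖ = ‖x‖ := by
  have h : ‖rotFun i j t x‖ ^ 2 = ‖x‖ ^ 2 := by
    rw [← real_inner_self_eq_norm_sq, ← real_inner_self_eq_norm_sq]
    simp only [rotFun, inner_add_left, inner_add_right, inner_smul_left, inner_smul_right,
      EuclideanSpace.inner_single_left, EuclideanSpace.inner_single_right]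
    simp [hij, hij.symm]
    linear_combination (x.ofLp i ^ 2 + x.ofLp j ^ 2) * Real.sin_sq_add_cos_sq t
  exact (pow_left_inj₀ (norm_nonneg _) (norm_nonneg _) two_ne_zero).1 h

/-- Rotation in a coordinate plane as a linear isometry. -/
def rotLI {i j : Fin d} (hij : i ≠ j) (t : ℝ) : E d →ₗᵢ[ℝ] E d where
  toFun := rotFun i j t
  map_add' x y := by
    simp only [rotFun, PiLp.add_apply]
    module
  map_smul' c x := by
    simp only [rotFun, PiLp.smul_apply, smul_eq_mul, RingHom.id_apply]
    module
  norm_map' x := norm_rotFun hij t x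

/-- Rotation in a coordinate plane as a linear isometry equivalence. -/
def rot {i j : Fin d} (hij : i ≠ j) (t : ℝ) : E d ≃ₗᵢ[ℝ] E d :=
  (rotLI hij t).toLinearIsometryEquiv rfl

@[simp]
theorem rot_apply {i j : Fin d} (hij : i ≠ j) (t : ℝ) (x : E d) :
    rot hij t x = rotFun i j t x := rfl

theorem hasDerivAt_rotFun {i j : Fin d} (hij : i ≠ j) (t : ℝ) (x : E d) :
    HasDerivAt (fun s => rotFun i j s x)
      (rotFun i j t x i • bv j - rotFun i j t x j • bv i) t := by
  rw [rotFun_apply_left hij, rotFun_apply_right hij]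
  unfold rotFun
  have h1 : HasDerivAt (fun s => (Real.cos s - 1) * x i - Real.sin s * x j)
      (-Real.sin t * x i - Real.cos t * x j) t :=
    (((Real.hasDerivAt_cos t).sub_const 1).mul_const _).sub
      ((Real.hasDerivAt_sin t).mul_const _)
  have h2 : HasDerivAt (fun s => (Real.cos s - 1) * x j + Real.sin s * x i)
      (-Real.sin t * x j + Real.cos t * x i) t :=
    (((Real.hasDerivAt_cos t).sub_const 1).mul_const _).add
      ((Real.hasDerivAt_sin t).mul_const _)
  refine (((h1.smul_const (bv i)).const_add x).add (h2.smul_const (bv j))).congr_deriv ?_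
  module

theorem continuous_rotFun (i j : Fin d) :
    Continuous fun p : ℝ × E d => rotFun i j p.1 p.2 := by
  unfold rotFun
  fun_prop

end Rotation

section Sphere

variable {d : ℕ}

theorem Sph.ne_zero (σ : Sph d) : (σ : E d) ≠ 0 := ne_zero_of_mem_unit_sphere σ

theorem Sph.norm_eq (σ : Sph d) : ‖(σ : E d)‖ = 1 := norm_eq_of_mem_sphere σ

/-- The action of a linear isometry on the unit sphere. -/
def sphIso (L : E d ≃ₗᵢ[ℝ] E d) : Sph d ≃ᵢ Sph d where
  toFun σ := ⟨L σ, by simp⟩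
  invFun σ := ⟨L.symm σ, by simp⟩
  left_inv σ := by simp
  right_inv σ := by simp
  isometry_toFun := Isometry.of_dist_eq fun σ τ => L.dist_map σ τ

@[simp]
theorem coe_sphIso (L : E d ≃ₗᵢ[ℝ] E d) (σ : Sph d) : (sphIso L σ : E d) = L σ := rfl

theorem measurePreserving_sphIso (L : E d ≃ₗᵢ[ℝ] E d) :
    MeasurePreserving (sphIso L) (sphMeasure d) (sphMeasure d) :=
  (sphIso L).measurePreserving_hausdorffMeasure _

theorem integral_sphIso (L : E d ≃ₗᵢ[ℝ] E d) (f : E d → ℝ) :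
    ∫ σ : Sph d, f (L σ) ∂(sphMeasure d) = ∫ σ : Sph d, f σ ∂(sphMeasure d) :=
  (measurePreserving_sphIso L).integral_comp (sphIso L).toHomeomorph.measurableEmbedding
    (fun σ : Sph d => f σ)

/-- Isometries act transitively on spheres. -/
theorem exists_isometry_map {x y : E d} (h : ‖x‖ = ‖y‖) : ∃ L : E d ≃ₗᵢ[ℝ] E d, L x = y :=
  ⟨(ℝ ∙ (x - y))ᗮ.reflection, Submodule.reflection_sub h⟩

/-- If the surface measure were infinite, all integrals of continuous functions would vanish. -/
theorem integral_eq_zero_of_not_isFiniteMeasure (hμ : ¬ IsFiniteMeasure (sphMeasure d))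
    {f : Sph d → ℝ} (hf : Continuous f) : ∫ σ, f σ ∂(sphMeasure d) = 0 := by
  by_cases hi : Integrable f (sphMeasure d)
  swap
  · exact integral_undef hi
  by_cases h0 : ∀ σ, f σ = 0
  · simp [h0]
  exfalso
  push Not at h0
  obtain ⟨σ₀, hσ₀⟩ := h0
  have hc : 0 < ‖f σ₀‖ / 2 := half_pos (norm_pos_iff.2 hσ₀)
  obtain ⟨U, hU⟩ : ∃ U : Set (Sph d), U = {σ | ‖f σ₀‖ / 2 < ‖f σ‖} := ⟨_, rfl⟩
  have hopen : IsOpen U := hU ▸ isOpen_lt continuous_const hf.norm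
  have hmem : σ₀ ∈ U := by
    rw [hU]
    exact half_lt_self (norm_pos_iff.2 hσ₀)
  have hV : (sphMeasure d) U < ⊤ := by
    refine lt_of_le_of_lt (measure_mono fun σ hσ => ?_) (hi.measure_norm_ge_lt_top hc)
    rw [hU] at hσ
    have hσ' : ‖f σ₀‖ / 2 < ‖f σ‖ := hσ
    exact hσ'.le
  apply hμ
  have : IsFiniteMeasureOnCompacts (sphMeasure d) := by
    have : IsLocallyFiniteMeasure (sphMeasure d) := by
      refine ⟨fun σ => ?_⟩
      obtain ⟨L, hL⟩ := exists_isometry_map (x := (σ : E d)) (y := σ₀)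
        (by rw [Sph.norm_eq, Sph.norm_eq])
      have hL' : sphIso L σ = σ₀ := Subtype.ext hL
      refine ⟨sphIso L ⁻¹' U, ?_, ?_⟩
      · apply (sphIso L).continuous.continuousAt
        rw [hL']
        exact hopen.mem_nhds hmem
      · rwa [(measurePreserving_sphIso L).measure_preimage hopen.measurableSet.nullMeasurableSet]
    infer_instance
  infer_instance

end Sphere

section Orthogonal

variable {d : ℕ}

/-- The orthogonal group of `ℝ^d`. -/
abbrev OGroup (d : ℕ) : Type := unitary (E d →L[ℝ] E d)

instance : ContinuousStar (E d →L[ℝ] E d) :=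
  ⟨(ContinuousLinearMap.adjoint (𝕜 := ℝ) (E := E d) (F := E d)).continuous⟩

instance : IsTopologicalGroup (OGroup d) where

instance : CompactSpace (OGroup d) := by
  refine isCompact_iff_compactSpace.1 ?_
  refine Metric.isCompact_of_isClosed_isBounded isClosed_unitary ?_
  refine (Metric.isBounded_closedBall (x := (0 : E d →L[ℝ] E d)) (r := 1)).subset fun u hu => ?_
  rw [mem_closedBall_zero_iff]
  refine ContinuousLinearMap.opNorm_le_bound _ zero_le_one fun x => ?_
  rw [one_mul]
  exact ((Unitary.linearIsometryEquiv (⟨u, hu⟩ : OGroup d)).norm_map x).le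

theorem OGroup.norm_apply (g : OGroup d) (x : E d) : ‖(g : E d →L[ℝ] E d) x‖ = ‖x‖ :=
  (Unitary.linearIsometryEquiv g).norm_map x

theorem OGroup.inner_apply (g : OGroup d) (x y : E d) :
    ⟪(g : E d →L[ℝ] E d) x, (g : E d →L[ℝ] E d) y⟫ = ⟪x, y⟫ :=
  (Unitary.linearIsometryEquiv g).inner_map_map x y

theorem continuous_OGroup_apply :
    Continuous fun p : OGroup d × E d => (p.1 : E d →L[ℝ] E d) p.2 :=
  (continuous_subtype_val.comp continuous_fst).clm_apply continuous_snd

theorem exists_rightInvariant_measure (d : ℕ) :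
    ∃ m : Measure (OGroup d), IsFiniteMeasure m ∧ m.IsMulRightInvariant ∧ m ≠ 0 := by
  refine ⟨(Measure.haar : Measure (OGroup d)).inv, ?_, inferInstance, ?_⟩
  · exact Measure.isFiniteMeasure_map _ _
  · intro h
    have : (Measure.haar : Measure (OGroup d)).inv Set.univ = 0 := by rw [h]; simp
    rw [Measure.inv_apply, Set.inv_univ] at this
    exact (NeZero.ne (Measure.haar : Measure (OGroup d))) (Measure.measure_univ_eq_zero.1 this)

/-- Integrals over the sphere are averages over the orthogonal group. -/
theorem integral_sphere_eq_integral_group [IsFiniteMeasure (sphMeasure d)]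
    (m : Measure (OGroup d)) [IsFiniteMeasure m] [m.IsMulRightInvariant]
    {f : E d → ℝ} (hf : Continuous fun σ : Sph d => f σ) {e : E d} (he : ‖e‖ = 1) :
    m.real Set.univ * ∫ σ : Sph d, f σ ∂(sphMeasure d) =
      (sphMeasure d).real Set.univ * ∫ g : OGroup d, f ((g : E d →L[ℝ] E d) e) ∂m := by
  have h1 : ∀ g : OGroup d, ∫ σ : Sph d, f ((g : E d →L[ℝ] E d) σ) ∂(sphMeasure d) =
      ∫ σ : Sph d, f σ ∂(sphMeasure d) := fun g =>
    integral_sphIso (Unitary.linearIsometryEquiv g) f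
  have h2 : ∀ σ : Sph d, ∫ g : OGroup d, f ((g : E d →L[ℝ] E d) σ) ∂m =
      ∫ g : OGroup d, f ((g : E d →L[ℝ] E d) e) ∂m := by
    intro σ
    obtain ⟨L, hL⟩ := exists_isometry_map (x := e) (y := σ) (by rw [he, Sph.norm_eq])
    rw [← integral_mul_right_eq_self (fun g : OGroup d => f ((g : E d →L[ℝ] E d) e))
      (Unitary.linearIsometryEquiv.symm L)]
    congr with g
    congr 1
    rw [← hL]
    rfl
  have hcont : Continuous (Function.uncurry fun (g : OGroup d) (σ : Sph d) =>
      f ((g : E d →L[ℝ] E d) σ)) := by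
    have : Continuous fun p : OGroup d × Sph d =>
        (⟨(p.1 : E d →L[ℝ] E d) p.2, by simp [OGroup.norm_apply]⟩ : Sph d) :=
      (continuous_OGroup_apply.comp (continuous_fst.prodMk
        (continuous_subtype_val.comp continuous_snd))).subtype_mk _
    exact hf.comp this
  have h3 := integral_integral_swap_of_hasCompactSupport (μ := m) (ν := sphMeasure d) hcont
    (HasCompactSupport.of_compactSpace _)
  simp only [h1, h2, integral_const, smul_eq_mul] at h3
  exact h3

end Orthogonal

section Poincare

variable {d : ℕ}

/-- The partial derivatives of a function on `ℝ^d`. -/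
def pd (i : Fin d) (f : E d → ℝ) (x : E d) : ℝ := fderiv ℝ f x (bv i)

theorem sum_coord_smul_bv (x : E d) : ∑ i, x i • bv i = x := by
  simpa using (EuclideanSpace.basisFun (Fin d) ℝ).sum_repr x

theorem sum_coord_mul_apply (L : E d →L[ℝ] ℝ) (x : E d) : ∑ i, x i * L (bv i) = L x := by
  conv_rhs => rw [← sum_coord_smul_bv x]
  simp

theorem sum_sq_apply_orthonormalBasis (L : E d →L[ℝ] ℝ) (b : OrthonormalBasis (Fin d) ℝ (E d)) :
    ∑ i, L (b i) ^ 2 = ‖L‖ ^ 2 := by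
  have h : ∀ v, L v = ⟪v, (InnerProductSpace.toDual ℝ (E d)).symm L⟫ := fun v => by
    rw [real_inner_comm, InnerProductSpace.toDual_symm_apply]
  have h2 := b.sum_sq_norm_inner_right ((InnerProductSpace.toDual ℝ (E d)).symm L)
  rw [LinearIsometryEquiv.norm_map] at h2
  rw [← h2]
  exact Finset.sum_congr rfl fun i _ => by rw [h, Real.norm_eq_abs, sq_abs]

theorem continuous_comp_of_ne_zero {X Y : Type*} [TopologicalSpace X] [TopologicalSpace Y]
    {V : E d → Y} (hV : ∀ x, x ≠ 0 → ContinuousAt V x) {φ : X → E d} (hφ : Continuous φ)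
    (h0 : ∀ p, φ p ≠ 0) : Continuous fun p => V (φ p) :=
  continuous_iff_continuousAt.2 fun p => (hV _ (h0 p)).comp hφ.continuousAt

theorem continuousAt_fderiv_of_contDiffAt_one {V : E d → ℝ} {x : E d} (hV : ContDiffAt ℝ 1 V x) :
    ContinuousAt (fderiv ℝ V) x :=
  (hV.fderiv_right (m := 0) (by norm_num)).continuousAt

theorem integral_group_comp_isometry (m : Measure (OGroup d)) [m.IsMulRightInvariant]
    (f : (E d →L[ℝ] E d) → ℝ) (L : E d ≃ₗᵢ[ℝ] E d) :
    ∫ g : OGroup d, f ((g : E d →L[ℝ] E d) ∘L (L : E d →L[ℝ] E d)) ∂m =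
      ∫ g : OGroup d, f (g : E d →L[ℝ] E d) ∂m :=
  integral_mul_right_eq_self (fun g : OGroup d => f (g : E d →L[ℝ] E d))
      (Unitary.linearIsometryEquiv.symm L)

theorem integral_group_sq_le (m : Measure (OGroup d)) [IsFiniteMeasure m]
    [m.IsMulRightInvariant] {V : E d → ℝ} (hV : ∀ x, x ≠ 0 → ContDiffAt ℝ 1 V x)
    (hodd : ∀ x, x ≠ 0 → V (-x) = -V x) {i j : Fin d} (hij : i ≠ j) :
    ∫ g : OGroup d, V ((g : E d →L[ℝ] E d) (bv i)) ^ 2 ∂m ≤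
      ∫ g : OGroup d, (fderiv ℝ V ((g : E d →L[ℝ] E d) (bv i))
        ((g : E d →L[ℝ] E d) (bv j))) ^ 2 ∂m := by
  have hne : ∀ (t : ℝ) (g : OGroup d), (g : E d →L[ℝ] E d) (rotFun i j t (bv i)) ≠ 0 := by
    intro t g
    rw [← norm_ne_zero_iff, OGroup.norm_apply, norm_rotFun hij]
    simp
  have hcφ : ∀ k : Fin d, Continuous fun p : ℝ × OGroup d =>
      (p.2 : E d →L[ℝ] E d) (rotFun i j p.1 (bv k)) := fun k =>
    continuous_OGroup_apply.comp (continuous_snd.prodMk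
      ((continuous_rotFun i j).comp (continuous_fst.prodMk continuous_const)))
  have hc1 : Continuous fun p : ℝ × OGroup d =>
      V ((p.2 : E d →L[ℝ] E d) (rotFun i j p.1 (bv i))) :=
    continuous_comp_of_ne_zero (fun x hx => (hV x hx).continuousAt) (hcφ i) fun p => hne _ _
  have hc2 : Continuous fun p : ℝ × OGroup d =>
      fderiv ℝ V ((p.2 : E d →L[ℝ] E d) (rotFun i j p.1 (bv i)))
        ((p.2 : E d →L[ℝ] E d) (rotFun i j p.1 (bv j))) :=
    (continuous_comp_of_ne_zero (fun x hx => continuousAt_fderiv_of_contDiffAt_one (hV x hx))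
      (hcφ i) fun p => hne _ _).clm_apply (hcφ j)
  have hW : ∀ g : OGroup d,
      ∫ t in (0 : ℝ)..2 * Real.pi, V ((g : E d →L[ℝ] E d) (rotFun i j t (bv i))) ^ 2 ≤
      ∫ t in (0 : ℝ)..2 * Real.pi, (fderiv ℝ V ((g : E d →L[ℝ] E d) (rotFun i j t (bv i)))
        ((g : E d →L[ℝ] E d) (rotFun i j t (bv j)))) ^ 2 := by
    intro g
    have hcg : Continuous fun t => V ((g : E d →L[ℝ] E d) (rotFun i j t (bv i))) :=
      hc1.comp (continuous_id.prodMk continuous_const)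
    apply wirtinger_inequality_s19
    · intro t
      have hr : HasDerivAt (fun s => rotFun i j s (bv i)) (rotFun i j t (bv j)) t := by
        refine (hasDerivAt_rotFun hij t (bv i)).congr_deriv ?_
        rw [rotFun_apply_left hij, rotFun_apply_right hij]
        simp [rotFun, hij, hij.symm]
        module
      exact ((hV _ (hne t g)).differentiableAt one_ne_zero).hasFDerivAt.comp_hasDerivAt t
        ((g : E d →L[ℝ] E d).hasFDerivAt.comp_hasDerivAt t hr)
    · exact hc2.comp (continuous_id.prodMk continuous_const)
    · simp [rotFun]
    · have hanti : ∀ t, V ((g : E d →L[ℝ] E d) (rotFun i j (t + Real.pi) (bv i))) =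
          -V ((g : E d →L[ℝ] E d) (rotFun i j t (bv i))) := by
        intro t
        rw [← hodd _ (hne t g), ← map_neg]
        congr 2
        simp [rotFun, hij, Real.cos_add_pi, Real.sin_add_pi]
        module
      have h1 : ∫ t in (0 : ℝ)..Real.pi,
          V ((g : E d →L[ℝ] E d) (rotFun i j (t + Real.pi) (bv i))) =
          ∫ t in Real.pi..2 * Real.pi, V ((g : E d →L[ℝ] E d) (rotFun i j t (bv i))) := by
        rw [intervalIntegral.integral_comp_add_right
          (fun t => V ((g : E d →L[ℝ] E d) (rotFun i j t (bv i)))), zero_add, two_mul]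
      rw [← intervalIntegral.integral_add_adjacent_intervals (b := Real.pi)
        (hcg.intervalIntegrable _ _) (hcg.intervalIntegrable _ _), ← h1]
      simp only [hanti, intervalIntegral.integral_neg, add_neg_cancel]
  have hint : ∀ {k : ℝ × OGroup d → ℝ}, Continuous k →
      Integrable (fun g => ∫ t in (0 : ℝ)..2 * Real.pi, k (t, g)) m := by
    intro k hk
    have hk' : Continuous fun g => ∫ t in (0 : ℝ)..2 * Real.pi, k (t, g) :=
      intervalIntegral.continuous_parametric_intervalIntegral_of_continuous'
        (f := fun g t => k (t, g)) (hk.comp continuous_swap) _ _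
    exact hk'.integrable_of_hasCompactSupport (HasCompactSupport.of_compactSpace _)
  have hs1 : Continuous fun p : ℝ × OGroup d =>
      V ((p.2 : E d →L[ℝ] E d) (rotFun i j p.1 (bv i))) ^ 2 := hc1.pow 2
  have hs2 : Continuous fun p : ℝ × OGroup d =>
      (fderiv ℝ V ((p.2 : E d →L[ℝ] E d) (rotFun i j p.1 (bv i)))
        ((p.2 : E d →L[ℝ] E d) (rotFun i j p.1 (bv j)))) ^ 2 := hc2.pow 2
  have hmono := integral_mono (hint hs1) (hint hs2) hW
  rw [← intervalIntegral_integral_swap_of_continuous m (f := fun t (g : OGroup d) =>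
      V ((g : E d →L[ℝ] E d) (rotFun i j t (bv i))) ^ 2) hs1,
    ← intervalIntegral_integral_swap_of_continuous m (f := fun t (g : OGroup d) =>
      (fderiv ℝ V ((g : E d →L[ℝ] E d) (rotFun i j t (bv i)))
        ((g : E d →L[ℝ] E d) (rotFun i j t (bv j)))) ^ 2) hs2] at hmono
  have e1 := fun t => integral_group_comp_isometry m (fun A => V (A (bv i)) ^ 2) (rot hij t)
  have e2 := fun t => integral_group_comp_isometry m
    (fun A => (fderiv ℝ V (A (bv i)) (A (bv j))) ^ 2) (rot hij t)
  simp only [ContinuousLinearMap.comp_apply, ContinuousLinearEquiv.coe_coe,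
    LinearIsometryEquiv.coe_toContinuousLinearEquiv, rot_apply] at e1 e2
  simp only [e1, e2, intervalIntegral.integral_const, smul_eq_mul, sub_zero] at hmono
  exact le_of_mul_le_mul_left hmono (by positivity)

/-- The Poincaré inequality for odd functions on the sphere. -/
theorem poincare_odd [IsFiniteMeasure (sphMeasure d)] (hd : 2 ≤ d) {V : E d → ℝ}
    (hV : ∀ x, x ≠ 0 → ContDiffAt ℝ 1 V x) (hodd : ∀ x, x ≠ 0 → V (-x) = -V x) :
    ((d : ℝ) - 1) * ∫ σ : Sph d, V σ ^ 2 ∂(sphMeasure d) ≤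
      ∫ σ : Sph d, (∑ i, pd i V σ ^ 2 - (∑ i, (σ : E d) i * pd i V σ) ^ 2) ∂(sphMeasure d) := by
  obtain ⟨m, hm1, hm2, hm3⟩ := exists_rightInvariant_measure d
  have hm : 0 < m.real Set.univ := by
    rw [measureReal_def, ENNReal.toReal_pos_iff]
    exact ⟨pos_iff_ne_zero.2 (mt Measure.measure_univ_eq_zero.1 hm3), measure_lt_top _ _⟩
  let i₀ : Fin d := ⟨0, by omega⟩
  have hcV : ∀ x : E d, x ≠ 0 → ContinuousAt V x := fun x hx => (hV x hx).continuousAt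
  have hcD : ∀ x : E d, x ≠ 0 → ContinuousAt (fderiv ℝ V) x :=
    fun x hx => continuousAt_fderiv_of_contDiffAt_one (hV x hx)
  have hcP : ∀ i, ∀ x : E d, x ≠ 0 → ContinuousAt (pd i V) x :=
    fun i x hx => (hcD x hx).clm_apply continuousAt_const
  have hcS : Continuous fun σ : Sph d => (σ : E d) := continuous_subtype_val
  have hcg : ∀ i, Continuous fun g : OGroup d => (g : E d →L[ℝ] E d) (bv i) := fun i =>
    continuous_OGroup_apply.comp (continuous_id.prodMk continuous_const)
  have hg0 : ∀ i, ∀ g : OGroup d, (g : E d →L[ℝ] E d) (bv i) ≠ 0 := by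
    intro i g
    rw [← norm_ne_zero_iff, OGroup.norm_apply]
    simp
  have hkey : ∀ g : OGroup d,
      ∑ i, pd i V ((g : E d →L[ℝ] E d) (bv i₀)) ^ 2
        - (∑ i, ((g : E d →L[ℝ] E d) (bv i₀)) i * pd i V ((g : E d →L[ℝ] E d) (bv i₀))) ^ 2 =
      ∑ j ∈ Finset.univ.erase i₀, (fderiv ℝ V ((g : E d →L[ℝ] E d) (bv i₀))
        ((g : E d →L[ℝ] E d) (bv j))) ^ 2 := by
    intro g
    obtain ⟨L, hL⟩ : ∃ L, L = fderiv ℝ V ((g : E d →L[ℝ] E d) (bv i₀)) := ⟨_, rfl⟩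
    simp only [pd, ← hL]
    rw [sum_coord_mul_apply, sub_eq_iff_eq_add,
      Finset.sum_erase_add _ (f := fun j => L ((g : E d →L[ℝ] E d) (bv j)) ^ 2)
        (Finset.mem_univ i₀)]
    have s1 := sum_sq_apply_orthonormalBasis L (EuclideanSpace.basisFun (Fin d) ℝ)
    have s2 := sum_sq_apply_orthonormalBasis L
      ((EuclideanSpace.basisFun (Fin d) ℝ).map (Unitary.linearIsometryEquiv g))
    simp only [EuclideanSpace.basisFun_apply, OrthonormalBasis.map_apply] at s1 s2
    rw [s1, ← s2]
    rfl
  have hG : ((d : ℝ) - 1) * ∫ g : OGroup d, V ((g : E d →L[ℝ] E d) (bv i₀)) ^ 2 ∂m ≤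
      ∫ g : OGroup d, (∑ i, pd i V ((g : E d →L[ℝ] E d) (bv i₀)) ^ 2
        - (∑ i, ((g : E d →L[ℝ] E d) (bv i₀)) i *
          pd i V ((g : E d →L[ℝ] E d) (bv i₀))) ^ 2) ∂m := by
    simp only [hkey]
    rw [integral_finsetSum]
    · have hcard : ((Finset.univ.erase i₀).card : ℝ) = (d : ℝ) - 1 := by
        rw [Finset.card_erase_of_mem (Finset.mem_univ _), Finset.card_univ, Fintype.card_fin,
          Nat.cast_sub (by omega), Nat.cast_one]
      rw [← hcard, ← nsmul_eq_mul]
      exact Finset.card_nsmul_le_sum _ _ _ fun j hj =>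
        integral_group_sq_le m hV hodd (Finset.ne_of_mem_erase hj).symm
    · intro j _
      exact (((continuous_comp_of_ne_zero hcD (hcg i₀) (hg0 i₀)).clm_apply
        (hcg j)).pow 2).integrable_of_hasCompactSupport (HasCompactSupport.of_compactSpace _)
  have hcW : Continuous fun σ : Sph d =>
      (fun x : E d => ∑ i, pd i V x ^ 2 - (∑ i, x i * pd i V x) ^ 2) σ := by
    refine continuous_comp_of_ne_zero
      (V := fun x : E d => ∑ i, pd i V x ^ 2 - (∑ i, x i * pd i V x) ^ 2)
      (fun x hx => ?_) hcS Sph.ne_zero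
    have hx' := fun i => hcP i x hx
    fun_prop
  have t1 := integral_sphere_eq_integral_group m (f := fun x => V x ^ 2)
    ((continuous_comp_of_ne_zero hcV hcS Sph.ne_zero).pow 2) (e := bv i₀) (by simp)
  have t2 := integral_sphere_eq_integral_group m
    (f := fun x => ∑ i, pd i V x ^ 2 - (∑ i, x i * pd i V x) ^ 2) hcW (e := bv i₀) (by simp)
  refine le_of_mul_le_mul_left ?_ hm
  calc _ = (d - 1) * (m.real Set.univ * ∫ σ : Sph d, V σ ^ 2 ∂(sphMeasure d)) := by ring
    _ = (sphMeasure d).real Set.univ *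
        (((d : ℝ) - 1) * ∫ g : OGroup d, V ((g : E d →L[ℝ] E d) (bv i₀)) ^ 2 ∂m) := by
      rw [t1]
      ring
    _ ≤ _ := by
      rw [t2]
      exact mul_le_mul_of_nonneg_left hG measureReal_nonneg

end Poincare

section Calculus

variable {d : ℕ}

/-- Smoothness away from the origin. -/
def Smo (f : E d → ℝ) : Prop := ∀ x, x ≠ 0 → ContDiffAt ℝ (⊤ : ℕ∞) f x

theorem Smo.differentiableAt {f : E d → ℝ} (hf : Smo f) {x : E d} (hx : x ≠ 0) :
    DifferentiableAt ℝ f x :=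
  (hf x hx).differentiableAt (by simp)

theorem Smo.continuousAt {f : E d → ℝ} (hf : Smo f) {x : E d} (hx : x ≠ 0) :
    ContinuousAt f x := (hf x hx).continuousAt

theorem Smo.continuous_sphere {f : E d → ℝ} (hf : Smo f) : Continuous fun σ : Sph d => f σ :=
  continuous_comp_of_ne_zero (fun _ hx => hf.continuousAt hx) continuous_subtype_val Sph.ne_zero

theorem Smo.integrable [IsFiniteMeasure (sphMeasure d)] {f : E d → ℝ} (hf : Smo f) :
    Integrable (fun σ : Sph d => f σ) (sphMeasure d) :=
  hf.continuous_sphere.integrable_of_hasCompactSupport (HasCompactSupport.of_compactSpace _)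

theorem Smo.const (c : ℝ) : Smo fun _ : E d => c := fun _ _ => contDiffAt_const

theorem Smo.coord (i : Fin d) : Smo fun x : E d => x i := fun _ _ => by fun_prop

theorem Smo.add {f g : E d → ℝ} (hf : Smo f) (hg : Smo g) : Smo fun x => f x + g x :=
  fun x hx => (hf x hx).add (hg x hx)

theorem Smo.sub {f g : E d → ℝ} (hf : Smo f) (hg : Smo g) : Smo fun x => f x - g x :=
  fun x hx => (hf x hx).sub (hg x hx)

theorem Smo.mul {f g : E d → ℝ} (hf : Smo f) (hg : Smo g) : Smo fun x => f x * g x :=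
  fun x hx => (hf x hx).mul (hg x hx)

theorem Smo.pow {f : E d → ℝ} (hf : Smo f) (n : ℕ) : Smo fun x => f x ^ n :=
  fun x hx => (hf x hx).pow n

theorem Smo.exp {f : E d → ℝ} (hf : Smo f) : Smo fun x => Real.exp (f x) :=
  fun x hx => (hf x hx).exp

theorem Smo.sum {ι : Type*} {s : Finset ι} {f : ι → E d → ℝ} (hf : ∀ i, Smo (f i)) :
    Smo fun x => ∑ i ∈ s, f i x :=
  fun x hx => ContDiffAt.sum fun i _ => hf i x hx

theorem Smo.pd {f : E d → ℝ} (hf : Smo f) (i : Fin d) : Smo (pd i f) :=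
  fun x hx => ((hf x hx).fderiv_right (m := (⊤ : ℕ∞)) (by simp)).clm_apply contDiffAt_const

theorem eventually_of_ne_zero {P : E d → Prop} (h : ∀ x, x ≠ 0 → P x) {x : E d} (hx : x ≠ 0) :
    ∀ᶠ y in nhds x, P y := by
  filter_upwards [isOpen_ne.mem_nhds hx] with y hy using h y hy

theorem Smo.congr {f g : E d → ℝ} (hf : Smo f) (h : ∀ x, x ≠ 0 → g x = f x) : Smo g :=
  fun x hx => (hf x hx).congr_of_eventuallyEq (eventually_of_ne_zero h hx)

theorem pd_congr {f g : E d → ℝ} (h : ∀ x, x ≠ 0 → f x = g x) (i : Fin d) :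
    ∀ x, x ≠ 0 → pd i f x = pd i g x := fun x hx => by
  have h' : f =ᶠ[nhds x] g := eventually_of_ne_zero h hx
  rw [pd, pd, h'.fderiv_eq]

theorem pd_const (i : Fin d) (c : ℝ) (x : E d) : pd i (fun _ => c) x = 0 := by
  simp [pd]

theorem pd_coord (i j : Fin d) (x : E d) : pd i (fun y => y j) x = if j = i then 1 else 0 := by
  have h : HasFDerivAt (fun y : E d => y j) (EuclideanSpace.proj j : E d →L[ℝ] ℝ) x :=
    (EuclideanSpace.proj j : E d →L[ℝ] ℝ).hasFDerivAt
  rw [pd, h.fderiv]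
  simp

theorem pd_add {f g : E d → ℝ} (hf : Smo f) (hg : Smo g) (i : Fin d) {x : E d} (hx : x ≠ 0) :
    pd i (fun y => f y + g y) x = pd i f x + pd i g x := by
  have := (hf.differentiableAt hx).hasFDerivAt.add (hg.differentiableAt hx).hasFDerivAt
  exact congrArg (fun L => L (bv i)) this.fderiv

theorem pd_sub {f g : E d → ℝ} (hf : Smo f) (hg : Smo g) (i : Fin d) {x : E d} (hx : x ≠ 0) :
    pd i (fun y => f y - g y) x = pd i f x - pd i g x := by
  have := (hf.differentiableAt hx).hasFDerivAt.sub (hg.differentiableAt hx).hasFDerivAt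
  exact congrArg (fun L => L (bv i)) this.fderiv

theorem pd_mul {f g : E d → ℝ} (hf : Smo f) (hg : Smo g) (i : Fin d) {x : E d} (hx : x ≠ 0) :
    pd i (fun y => f y * g y) x = f x * pd i g x + g x * pd i f x := by
  have := (hf.differentiableAt hx).hasFDerivAt.mul (hg.differentiableAt hx).hasFDerivAt
  exact congrArg (fun L => L (bv i)) this.fderiv

theorem pd_const_mul {f : E d → ℝ} (hf : Smo f) (c : ℝ) (i : Fin d) {x : E d} (hx : x ≠ 0) :
    pd i (fun y => c * f y) x = c * pd i f x := by
  rw [pd_mul (Smo.const c) hf i hx, pd_const, mul_zero, add_zero]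

theorem pd_sq {f : E d → ℝ} (hf : Smo f) (i : Fin d) {x : E d} (hx : x ≠ 0) :
    pd i (fun y => f y ^ 2) x = 2 * f x * pd i f x := by
  have h : (fun y => f y ^ 2) = fun y => f y * f y := funext fun y => sq (f y)
  rw [h, pd_mul hf hf i hx]
  ring

theorem pd_exp {f : E d → ℝ} (hf : Smo f) (i : Fin d) {x : E d} (hx : x ≠ 0) :
    pd i (fun y => Real.exp (f y)) x = Real.exp (f x) * pd i f x := by
  have := (hf.differentiableAt hx).hasFDerivAt.exp
  exact congrArg (fun L => L (bv i)) this.fderiv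

theorem pd_sum {ι : Type*} {s : Finset ι} {f : ι → E d → ℝ} (hf : ∀ i, Smo (f i)) (i : Fin d)
    {x : E d} (hx : x ≠ 0) :
    pd i (fun y => ∑ k ∈ s, f k y) x = ∑ k ∈ s, pd i (f k) x := by
  have := HasFDerivAt.fun_sum (u := s) fun k _ => ((hf k).differentiableAt hx).hasFDerivAt
  rw [pd, this.fderiv]
  simp [pd]

theorem pd_comm {f : E d → ℝ} (hf : Smo f) (i j : Fin d) {x : E d} (hx : x ≠ 0) :
    pd i (pd j f) x = pd j (pd i f) x := by
  have hs : IsSymmSndFDerivAt ℝ f x := (hf x hx).isSymmSndFDerivAt (by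
    rw [minSmoothness_of_isRCLikeNormedField]
    exact WithTop.coe_le_coe.2 (le_top : (2 : ℕ∞) ≤ ⊤))
  have hd : DifferentiableAt ℝ (fderiv ℝ f) x :=
    ((hf x hx).fderiv_right (m := (⊤ : ℕ∞)) (by simp)).differentiableAt (by simp)
  have key : ∀ a b : Fin d, pd a (pd b f) x = fderiv ℝ (fderiv ℝ f) x (bv a) (bv b) := by
    intro a b
    have h := hd.hasFDerivAt.clm_apply (hasFDerivAt_const (bv b) x)
    have h2 : fderiv ℝ (pd b f) x = _ := h.fderiv
    rw [pd, h2]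
    simp
  rw [key, key, hs.eq]

theorem fderiv_eq_sum_pd (f : E d → ℝ) (x v : E d) : fderiv ℝ f x v = ∑ i, v i * pd i f x :=
  (sum_coord_mul_apply _ _).symm

theorem sum_sq_sphere (σ : Sph d) : ∑ i, (σ : E d) i ^ 2 = 1 := by
  rw [← EuclideanSpace.real_norm_sq_eq, Sph.norm_eq, one_pow]

/-- Integration by parts on the sphere for the generator of a coordinate rotation. -/
theorem integral_rotation_derivative [IsFiniteMeasure (sphMeasure d)] {f : E d → ℝ} (hf : Smo f)
    (i j : Fin d) :
    ∫ σ : Sph d, ((σ : E d) i * pd j f σ - (σ : E d) j * pd i f σ) ∂(sphMeasure d) = 0 := by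
  rcases eq_or_ne i j with rfl | hij
  · simp
  have hX : Smo fun x : E d => x i * pd j f x - x j * pd i f x :=
    ((Smo.coord i).mul (hf.pd j)).sub ((Smo.coord j).mul (hf.pd i))
  have hne : ∀ (t : ℝ) (σ : Sph d), rotFun i j t σ ≠ 0 := by
    intro t σ
    rw [← norm_ne_zero_iff, norm_rotFun hij, Sph.norm_eq]
    exact one_ne_zero
  have hcφ : Continuous fun p : ℝ × Sph d => rotFun i j p.1 p.2 :=
    (continuous_rotFun i j).comp (continuous_fst.prodMk
      (continuous_subtype_val.comp continuous_snd))
  have hc : Continuous fun p : ℝ × Sph d =>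
      (fun x : E d => x i * pd j f x - x j * pd i f x) (rotFun i j p.1 p.2) :=
    continuous_comp_of_ne_zero (fun x hx => hX.continuousAt hx) hcφ fun p => hne _ _
  have hder : ∀ (σ : Sph d) (t : ℝ), HasDerivAt (fun s => f (rotFun i j s σ))
      ((fun x : E d => x i * pd j f x - x j * pd i f x) (rotFun i j t σ)) t := by
    intro σ t
    refine ((hf.differentiableAt (hne t σ)).hasFDerivAt.comp_hasDerivAt t
      (hasDerivAt_rotFun hij t σ)).congr_deriv ?_
    simp [pd]
  have hftc : ∀ σ : Sph d, ∫ t in (0 : ℝ)..1,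
      (fun x : E d => x i * pd j f x - x j * pd i f x) (rotFun i j t σ) =
      f (rot hij 1 σ) - f σ := by
    intro σ
    rw [intervalIntegral.integral_eq_sub_of_hasDerivAt (fun t _ => hder σ t)
      ((hc.comp (continuous_id.prodMk continuous_const)).intervalIntegrable _ _)]
    simp [rotFun]
  have hswap := intervalIntegral_integral_swap_of_continuous (sphMeasure d)
    (f := fun t (σ : Sph d) =>
      (fun x : E d => x i * pd j f x - x j * pd i f x) (rotFun i j t σ)) hc 0 1
  have hinv := fun t => integral_sphIso (rot hij t)
    (fun x : E d => x i * pd j f x - x j * pd i f x)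
  simp only [rot_apply] at hinv
  have hr : Integrable (fun σ : Sph d => f (rot hij 1 σ)) (sphMeasure d) := by
    have : Continuous fun σ : Sph d => f (rot hij 1 σ) :=
      hf.continuous_sphere.comp (sphIso (rot hij 1)).continuous
    exact this.integrable_of_hasCompactSupport (HasCompactSupport.of_compactSpace _)
  simp only [hftc] at hswap
  rw [integral_sub hr hf.integrable, integral_sphIso, sub_self] at hswap
  simpa [hinv] using hswap

/-- The divergence theorem on the sphere for tangential vector fields. -/
theorem integral_div_eq_zero [IsFiniteMeasure (sphMeasure d)] {W : Fin d → E d → ℝ}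
    (hW : ∀ i, Smo (W i)) (htan : ∀ x : E d, x ≠ 0 → ∑ i, x i * W i x = 0) :
    ∫ σ : Sph d, ∑ i, pd i (W i) σ ∂(sphMeasure d) = 0 := by
  have hdiff : ∀ x : E d, x ≠ 0 → ∀ i, W i x + ∑ j, x j * pd i (W j) x = 0 := by
    intro x hx i
    have h := pd_congr htan i x hx
    rw [pd_const, pd_sum (fun j => (Smo.coord j).mul (hW j)) i hx] at h
    simp only [pd_mul (Smo.coord _) (hW _) i hx, pd_coord, Finset.sum_add_distrib] at h
    simp only [mul_ite, mul_one, mul_zero, Finset.sum_ite_eq', Finset.mem_univ, if_true] at h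
    linarith
  have hpt : ∀ σ : Sph d, ∑ i, pd i (W i) σ =
      ∑ i, ∑ j, ((σ : E d) i * pd j (fun x => x i * W j x) σ
        - (σ : E d) j * pd i (fun x => x i * W j x) σ) := by
    intro σ
    have hσ := σ.ne_zero
    simp only [pd_mul (Smo.coord _) (hW _) _ hσ, pd_coord, mul_ite, mul_one, mul_zero, if_true,
      mul_add, Finset.sum_sub_distrib, Finset.sum_add_distrib, Finset.sum_ite_eq,
      Finset.mem_univ]
    have h1 : ∑ i, ∑ j, (σ : E d) i * ((σ : E d) i * pd j (W j) σ) = ∑ j, pd j (W j) σ := by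
      calc _ = ∑ i, (σ : E d) i ^ 2 * ∑ j, pd j (W j) σ := by
            refine Finset.sum_congr rfl fun i _ => ?_
            rw [Finset.mul_sum]
            exact Finset.sum_congr rfl fun j _ => by ring
        _ = _ := by rw [← Finset.sum_mul, sum_sq_sphere, one_mul]
    have h2 : ∑ i, ∑ j, (σ : E d) j * ((σ : E d) i * pd i (W j) σ) = 0 := by
      calc _ = ∑ i, (σ : E d) i * ∑ j, (σ : E d) j * pd i (W j) σ := by
            refine Finset.sum_congr rfl fun i _ => ?_
            rw [Finset.mul_sum]
            exact Finset.sum_congr rfl fun j _ => by ring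
        _ = ∑ i, -((σ : E d) i * W i σ) := by
            refine Finset.sum_congr rfl fun i _ => ?_
            rw [eq_neg_of_add_eq_zero_right (hdiff σ hσ i)]
            ring
        _ = 0 := by rw [Finset.sum_neg_distrib, htan σ hσ, neg_zero]
    rw [h1, h2, htan σ hσ]
    simp
  have hs : ∀ i j : Fin d, Smo fun x : E d => x i * W j x := fun i j => (Smo.coord i).mul (hW j)
  have hI : ∀ i j : Fin d, Smo fun x : E d => x i * pd j (fun x => x i * W j x) x
      - x j * pd i (fun x => x i * W j x) x := fun i j =>
    ((Smo.coord i).mul ((hs i j).pd j)).sub ((Smo.coord j).mul ((hs i j).pd i))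
  simp only [hpt]
  rw [integral_finsetSum _ fun i _ => (Smo.sum (hI i)).integrable]
  refine Finset.sum_eq_zero fun i _ => ?_
  rw [integral_finsetSum _ fun j _ => (hI i j).integrable]
  exact Finset.sum_eq_zero fun j _ => integral_rotation_derivative (hs i j) i j

end Calculus

section Bochner

variable {d : ℕ}

/-- Squared Hilbert-Schmidt norm of a perturbation of a symmetric matrix `H` with `H x = -v`. -/
theorem sum_sq_perturbation {H : Fin d → Fin d → ℝ} {x v : Fin d → ℝ}
    (hsymm : ∀ i j, H i j = H j i) (hx : ∑ i, x i ^ 2 = 1) (hxv : ∑ i, x i * v i = 0)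
    (hH : ∀ i, ∑ j, x j * H i j = -v i) (a α β γ : ℝ) :
    ∑ i, ∑ j, (H i j + a * (x i * v j + v i * x j) + α * (if i = j then 1 else 0)
        + β * (x i * x j) + γ * (v i * v j)) ^ 2 =
      ∑ i, ∑ j, H i j ^ 2 + (2 * a ^ 2 - 4 * a) * ∑ i, v i ^ 2 + 2 * α * ∑ i, H i i
        + 2 * γ * ∑ i, ∑ j, H i j * v i * v j + d * α ^ 2 + β ^ 2 + γ ^ 2 * (∑ i, v i ^ 2) ^ 2
        + 2 * α * β + 2 * α * γ * ∑ i, v i ^ 2 := by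
  have row : ∀ i, ∑ j, (H i j + a * (x i * v j + v i * x j) + α * (if i = j then 1 else 0)
        + β * (x i * x j) + γ * (v i * v j)) ^ 2 =
      ∑ j, H i j ^ 2 + a ^ 2 * (x i ^ 2 * ∑ j, v j ^ 2 + v i ^ 2) + α ^ 2 + β ^ 2 * x i ^ 2
        + γ ^ 2 * v i ^ 2 * ∑ j, v j ^ 2
        + 2 * a * x i * ∑ j, H i j * v j - 2 * a * v i ^ 2 + 2 * α * H i i
        - 2 * β * (x i * v i)
        + 2 * γ * ∑ j, H i j * v i * v j + 4 * a * α * (x i * v i)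
        + 2 * a * β * (x i * v i) + 2 * a * γ * (∑ j, v j ^ 2) * (x i * v i)
        + 2 * α * β * x i ^ 2 + 2 * α * γ * v i ^ 2 := by
    intro i
    have e1 : ∑ j, α * (if i = j then 1 else 0) *
        (2 * (H i j + a * (x i * v j + v i * x j) + β * (x i * x j) + γ * (v i * v j))
          + α * (if i = j then 1 else 0)) =
        α * (2 * (H i i + a * (x i * v i + v i * x i) + β * (x i * x i) + γ * (v i * v i)) + α) := by
      rw [Finset.sum_eq_single i]
      · simp
      · intro j _ hj
        simp [hj.symm]
      · simp
    have e2 : ∑ j, H i j * v i * v j = v i * ∑ j, H i j * v j := by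
      rw [Finset.mul_sum]
      exact Finset.sum_congr rfl fun j _ => by ring
    have e3 : ∑ j, (H i j + a * (x i * v j + v i * x j)
        + β * (x i * x j) + γ * (v i * v j)) ^ 2 =
        ∑ j, H i j ^ 2 + (a * x i + γ * v i) ^ 2 * ∑ j, v j ^ 2
          + (a * v i + β * x i) ^ 2 * ∑ j, x j ^ 2
          + 2 * (a * x i + γ * v i) * ∑ j, H i j * v j
          + 2 * (a * v i + β * x i) * ∑ j, x j * H i j
          + 2 * (a * x i + γ * v i) * (a * v i + β * x i) * ∑ j, x j * v j := by
      simp only [Finset.mul_sum, ← Finset.sum_add_distrib]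
      exact Finset.sum_congr rfl fun j _ => by ring
    have e4 : ∑ j, (H i j + a * (x i * v j + v i * x j) + α * (if i = j then 1 else 0)
        + β * (x i * x j) + γ * (v i * v j)) ^ 2 =
        ∑ j, (H i j + a * (x i * v j + v i * x j)
          + β * (x i * x j) + γ * (v i * v j)) ^ 2 + ∑ j, α * (if i = j then 1 else 0) *
        (2 * (H i j + a * (x i * v j + v i * x j) + β * (x i * x j) + γ * (v i * v j))
          + α * (if i = j then 1 else 0)) := by
      rw [← Finset.sum_add_distrib]
      exact Finset.sum_congr rfl fun j _ => by ring
    rw [e4, e1, e3, e2, hx, hxv, hH]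
    ring
  have e5 : ∑ i, x i * ∑ j, H i j * v j = -∑ i, v i ^ 2 := by
    simp only [Finset.mul_sum]
    rw [Finset.sum_comm, ← Finset.sum_neg_distrib]
    refine Finset.sum_congr rfl fun j _ => ?_
    calc _ = v j * ∑ i, x i * H j i := by
          rw [Finset.mul_sum]
          exact Finset.sum_congr rfl fun i _ => by rw [hsymm i j]; ring
      _ = _ := by rw [hH]; ring
  have e6 : ∑ i : Fin d, α ^ 2 = d * α ^ 2 := by simp
  simp only [row, Finset.sum_add_distrib, Finset.sum_sub_distrib, ← Finset.mul_sum,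
    ← Finset.sum_mul, mul_assoc, hx, hxv, e5, e6]
  ring

/-- The pointwise quadratic inequality for the (tangential) Hessian. -/
theorem hessian_inequality (hd : 2 ≤ d) {H : Fin d → Fin d → ℝ} {x v : Fin d → ℝ}
    (hsymm : ∀ i j, H i j = H j i) (hx : ∑ i, x i ^ 2 = 1) (hxv : ∑ i, x i * v i = 0)
    (hH : ∀ i, ∑ j, x j * H i j = -v i) {n : ℝ} (hn : n = (d : ℝ) - 1) :
    0 ≤ n * (n - 1) * (∑ i, ∑ j, H i j ^ 2 - 2 * ∑ i, v i ^ 2) - (n - 1) * (∑ i, H i i) ^ 2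
      - n * ∑ i, ∑ j, H i j * v i * v j + (∑ i, H i i) * ∑ i, v i ^ 2
      + (∑ i, v i ^ 2) ^ 2 / 4 := by
  rcases hd.eq_or_lt with rfl | hd'
  · have hn1 : n = 1 := by rw [hn]; norm_num
    subst hn1
    simp only [Fin.sum_univ_two] at *
    have s := hsymm 0 1
    have h0 := hH 0
    have h1 := hH 1
    rw [← s] at h1 ⊢
    obtain ⟨t, ht⟩ : ∃ t, t = x 0 * v 1 - x 1 * v 0 := ⟨_, rfl⟩
    have hv0 : v 0 = -(t * x 1) := by
      rw [ht]; linear_combination (-v 0) * hx + x 0 * hxv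
    have hv1 : v 1 = t * x 0 := by
      rw [ht]; linear_combination (-v 1) * hx + x 1 * hxv
    have hq : H 0 0 * x 0 ^ 2 + 2 * H 0 1 * x 0 * x 1 + H 1 1 * x 1 ^ 2 = 0 := by
      linear_combination x 0 * h0 + x 1 * h1 - hxv
    have key : H 0 0 * v 0 * v 0 + H 0 1 * v 0 * v 1 + (H 0 1 * v 1 * v 0 + H 1 1 * v 1 * v 1)
        = (H 0 0 + H 1 1) * (v 0 ^ 2 + v 1 ^ 2) := by
      rw [hv0, hv1]
      linear_combination (-t ^ 2) * hq
    have : 0 ≤ (v 0 ^ 2 + v 1 ^ 2) ^ 2 := sq_nonneg _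
    linarith
  · have hn2 : 1 < n := by
      have : (3 : ℝ) ≤ d := by exact_mod_cast hd'
      linarith
    obtain ⟨q, hq⟩ : ∃ q, q = ∑ i, v i ^ 2 := ⟨_, rfl⟩
    obtain ⟨T, hT⟩ : ∃ T, T = ∑ i, H i i := ⟨_, rfl⟩
    obtain ⟨c, hc⟩ : ∃ c, c = 1 / (2 * (n - 1)) := ⟨_, rfl⟩
    have hpos : 0 ≤ ∑ i, ∑ j, (H i j + 1 * (x i * v j + v i * x j)
        + (-(T - c * q) / n) * (if i = j then 1 else 0)
        + ((T - c * q) / n) * (x i * x j) + (-c) * (v i * v j)) ^ 2 :=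
      Finset.sum_nonneg fun i _ => Finset.sum_nonneg fun j _ => sq_nonneg _
    rw [sum_sq_perturbation hsymm hx hxv hH, ← hq, ← hT] at hpos
    rw [← hq, ← hT]
    have hdn : (d : ℝ) = n + 1 := by linarith
    rw [hdn] at hpos
    have hm := mul_nonneg (by nlinarith : 0 ≤ n * (n - 1)) hpos
    refine hm.trans_eq ?_
    have : n - 1 ≠ 0 := by linarith
    have : n ≠ 0 := by linarith
    rw [hc]
    field_simp
    ring

/-- Squared norm of the Euclidean gradient. -/
def gradSq (f : E d → ℝ) (x : E d) : ℝ := ∑ i, pd i f x ^ 2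

/-- Squared Hilbert-Schmidt norm of the Euclidean Hessian. -/
def hessSq (f : E d → ℝ) (x : E d) : ℝ := ∑ i, ∑ j, pd i (pd j f) x ^ 2

/-- The Hessian evaluated at the gradient. -/
def hessGrad (f : E d → ℝ) (x : E d) : ℝ := ∑ i, ∑ j, pd i (pd j f) x * pd i f x * pd j f x

/-- The squared Euclidean norm in coordinates. -/
def radSq (x : E d) : ℝ := ∑ i, x i ^ 2

/-- The iterated carré du champ in terms of the 0-homogeneous extension. -/
def gammaTwo (f : E d → ℝ) (x : E d) : ℝ :=
  (1 / 2) * lapl (fun y => radSq y * gradSq f y) x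
    - ∑ i, pd i f x * pd i (fun y => radSq y * lapl f y) x

/-- Euler's relation for 0-homogeneous functions. -/
def Euler (f : E d → ℝ) : Prop := ∀ x, x ≠ 0 → ∑ i, x i * pd i f x = 0

theorem lapl_eq (f : E d → ℝ) (x : E d) : lapl f x = ∑ i, pd i (pd i f) x := rfl

theorem smo_radSq : Smo (radSq (d := d)) := Smo.sum fun i => (Smo.coord i).pow 2

theorem Smo.gradSq {f : E d → ℝ} (hf : Smo f) : Smo (gradSq f) :=
  Smo.sum fun i => (hf.pd i).pow 2

theorem Smo.lapl {f : E d → ℝ} (hf : Smo f) : Smo (lapl f) :=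
  Smo.sum fun i => (hf.pd i).pd i

theorem Smo.hessSq {f : E d → ℝ} (hf : Smo f) : Smo (hessSq f) :=
  Smo.sum fun i => Smo.sum fun j => ((hf.pd j).pd i).pow 2

theorem Smo.hessGrad {f : E d → ℝ} (hf : Smo f) : Smo (hessGrad f) :=
  Smo.sum fun i => Smo.sum fun j => (((hf.pd j).pd i).mul (hf.pd i)).mul (hf.pd j)

theorem radSq_sphere (σ : Sph d) : radSq (σ : E d) = 1 := sum_sq_sphere σ

theorem pd_radSq (i : Fin d) {x : E d} (hx : x ≠ 0) : pd i radSq x = 2 * x i := by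
  unfold radSq
  rw [pd_sum (fun k => (Smo.coord k).pow 2) i hx]
  simp only [pd_sq (Smo.coord _) i hx, pd_coord]
  simp

theorem pd_gradSq {f : E d → ℝ} (hf : Smo f) (i : Fin d) {x : E d} (hx : x ≠ 0) :
    pd i (gradSq f) x = 2 * ∑ j, pd i (pd j f) x * pd j f x := by
  unfold gradSq
  rw [pd_sum (fun k => (hf.pd k).pow 2) i hx, Finset.mul_sum]
  refine Finset.sum_congr rfl fun j _ => ?_
  rw [pd_sq (hf.pd j) i hx]
  ring

theorem Euler.hessian {f : E d → ℝ} (hE : Euler f) (hf : Smo f) (i : Fin d) {x : E d}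
    (hx : x ≠ 0) : ∑ j, x j * pd i (pd j f) x = -pd i f x := by
  have h := pd_congr hE i x hx
  rw [pd_const, pd_sum (fun j => (Smo.coord j).mul (hf.pd j)) i hx] at h
  simp only [pd_mul (Smo.coord _) (hf.pd _) i hx, pd_coord, Finset.sum_add_distrib] at h
  simp only [mul_ite, mul_one, mul_zero, Finset.sum_ite_eq', Finset.mem_univ, if_true] at h
  linarith

theorem Euler.sum_coord_pd_gradSq {f : E d → ℝ} (hE : Euler f) (hf : Smo f) {x : E d}
    (hx : x ≠ 0) : ∑ i, x i * pd i (gradSq f) x = -2 * gradSq f x := by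
  calc _ = ∑ i, ∑ j, 2 * (pd j f x * (x i * pd j (pd i f) x)) := by
        refine Finset.sum_congr rfl fun i _ => ?_
        rw [pd_gradSq hf i hx, Finset.mul_sum, Finset.mul_sum]
        refine Finset.sum_congr rfl fun j _ => ?_
        rw [pd_comm hf i j hx]
        ring
    _ = ∑ j, 2 * (pd j f x * ∑ i, x i * pd j (pd i f) x) := by
        rw [Finset.sum_comm]
        simp only [Finset.mul_sum]
    _ = _ := by
        simp only [hE.hessian hf _ hx]
        rw [gradSq, Finset.mul_sum]
        exact Finset.sum_congr rfl fun j _ => by ring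

theorem sum_pd_mul_pd_gradSq {f : E d → ℝ} (hf : Smo f) {x : E d} (hx : x ≠ 0) :
    ∑ i, pd i f x * pd i (gradSq f) x = 2 * hessGrad f x := by
  rw [hessGrad, Finset.mul_sum]
  refine Finset.sum_congr rfl fun i _ => ?_
  rw [pd_gradSq hf i hx, Finset.mul_sum, Finset.mul_sum, Finset.mul_sum]
  exact Finset.sum_congr rfl fun j _ => by ring

theorem lapl_gradSq {f : E d → ℝ} (hf : Smo f) {x : E d} (hx : x ≠ 0) :
    lapl (gradSq f) x = 2 * hessSq f x + 2 * ∑ i, pd i f x * pd i (lapl f) x := by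
  have h1 : ∀ i, pd i (pd i (gradSq f)) x =
      2 * ∑ j, (pd i (pd j f) x ^ 2 + pd j f x * pd j (pd i (pd i f)) x) := by
    intro i
    have hs : ∀ j, Smo fun y => pd i (pd j f) y * pd j f y :=
      fun j => ((hf.pd j).pd i).mul (hf.pd j)
    rw [pd_congr (fun y hy => pd_gradSq hf i hy) i x hx, pd_const_mul (Smo.sum hs) 2 i hx,
      pd_sum hs i hx]
    congr 1
    refine Finset.sum_congr rfl fun j _ => ?_
    rw [pd_mul ((hf.pd j).pd i) (hf.pd j) i hx,
      pd_congr (fun y hy => pd_comm hf i j hy) i x hx, pd_comm (hf.pd i) i j hx]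
    ring
  have h2 : ∀ i, pd i (lapl f) x = ∑ j, pd i (pd j (pd j f)) x := by
    intro i
    exact pd_sum (fun j => (hf.pd j).pd j) i hx
  rw [lapl_eq]
  simp only [h1, h2, Finset.sum_add_distrib, ← Finset.mul_sum, mul_add]
  congr 2
  rw [Finset.sum_comm]
  exact Finset.sum_congr rfl fun j _ => by rw [Finset.mul_sum]

theorem pd_radSq_mul {f : E d → ℝ} (hf : Smo f) (i : Fin d) {x : E d} (hx : x ≠ 0) :
    pd i (fun y => radSq y * f y) x = radSq x * pd i f x + 2 * (x i * f x) := by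
  rw [pd_mul smo_radSq hf i hx, pd_radSq i hx]
  ring

theorem lapl_radSq_mul {f : E d → ℝ} (hf : Smo f) {x : E d} (hx : x ≠ 0) :
    lapl (fun y => radSq y * f y) x =
      radSq x * lapl f x + 4 * ∑ i, x i * pd i f x + 2 * d * f x := by
  have h1 : ∀ i, pd i (pd i fun y => radSq y * f y) x =
      radSq x * pd i (pd i f) x + 4 * (x i * pd i f x) + 2 * f x := by
    intro i
    rw [pd_congr (fun y hy => pd_radSq_mul hf i hy) i x hx,
      pd_add (smo_radSq.mul (hf.pd i)) ((Smo.const 2).mul ((Smo.coord i).mul hf)) i hx,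
      pd_radSq_mul (hf.pd i) i hx, pd_const_mul ((Smo.coord i).mul hf) 2 i hx,
      pd_mul (Smo.coord i) hf i hx, pd_coord]
    simp only [if_true]
    ring
  rw [lapl_eq]
  simp only [h1, Finset.sum_add_distrib, ← Finset.mul_sum, lapl_eq]
  simp
  ring

/-- Bochner's formula on the sphere. -/
theorem gammaTwo_eq {f : E d → ℝ} (hf : Smo f) (hE : Euler f) (σ : Sph d) :
    gammaTwo f σ = hessSq f σ + ((d : ℝ) - 4) * gradSq f σ := by
  have hσ := σ.ne_zero
  rw [gammaTwo, lapl_radSq_mul hf.gradSq hσ, lapl_gradSq hf hσ, hE.sum_coord_pd_gradSq hf hσ,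
    radSq_sphere]
  have h : ∑ i, pd i f (σ : E d) * pd i (fun y => radSq y * lapl f y) σ =
      ∑ i, pd i f (σ : E d) * pd i (lapl f) σ := by
    calc _ = ∑ i, pd i f (σ : E d) * pd i (lapl f) σ
          + 2 * lapl f σ * ∑ i, (σ : E d) i * pd i f σ := by
          rw [Finset.mul_sum, ← Finset.sum_add_distrib]
          refine Finset.sum_congr rfl fun i _ => ?_
          rw [pd_radSq_mul hf.lapl i hσ, radSq_sphere]
          ring
      _ = _ := by rw [hE σ hσ, mul_zero, add_zero]
  rw [h]
  ring

end Bochner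

section IntegralIdentities

variable {d : ℕ}

theorem integral_exp_mul_lapl_mul_gradSq [IsFiniteMeasure (sphMeasure d)] {f : E d → ℝ}
    (hf : Smo f) (hE : Euler f) :
    ∫ σ : Sph d, Real.exp (f σ) *
      (lapl f σ * gradSq f σ + 2 * hessGrad f σ + gradSq f σ ^ 2) ∂(sphMeasure d) = 0 := by
  have h := integral_div_eq_zero (W := fun i x => gradSq f x * (Real.exp (f x) * pd i f x))
    (fun i => hf.gradSq.mul (hf.exp.mul (hf.pd i))) (fun x hx => by
      calc _ = gradSq f x * Real.exp (f x) * ∑ i, x i * pd i f x := by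
            rw [Finset.mul_sum]
            exact Finset.sum_congr rfl fun i _ => by ring
        _ = 0 := by rw [hE x hx, mul_zero])
  rw [← h]
  congr 1 with σ
  have hσ := σ.ne_zero
  rw [← sum_pd_mul_pd_gradSq hf hσ, lapl_eq, sq]
  conv_lhs => enter [2, 2, 2]; rw [gradSq]
  simp only [Finset.mul_sum, Finset.sum_mul, ← Finset.sum_add_distrib]
  refine Finset.sum_congr rfl fun i _ => ?_
  rw [pd_mul hf.gradSq (hf.exp.mul (hf.pd i)) i hσ, pd_mul hf.exp (hf.pd i) i hσ, pd_exp hf i hσ]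
  ring

theorem integral_mul_lapl [IsFiniteMeasure (sphMeasure d)] {f : E d → ℝ}
    (hf : Smo f) (hE : Euler f) :
    ∫ σ : Sph d, (f σ * lapl f σ + gradSq f σ) ∂(sphMeasure d) = 0 := by
  have h := integral_div_eq_zero (W := fun i x => f x * pd i f x)
    (fun i => hf.mul (hf.pd i)) (fun x hx => by
      calc _ = f x * ∑ i, x i * pd i f x := by
            rw [Finset.mul_sum]
            exact Finset.sum_congr rfl fun i _ => by ring
        _ = 0 := by rw [hE x hx, mul_zero])
  rw [← h]
  congr 1 with σ
  rw [lapl_eq, gradSq, Finset.mul_sum, ← Finset.sum_add_distrib]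
  refine Finset.sum_congr rfl fun i _ => ?_
  rw [pd_mul hf (hf.pd i) i σ.ne_zero]
  ring

/-- Weighted integration of Bochner's formula. -/
theorem integral_mul_gammaTwo [IsFiniteMeasure (sphMeasure d)] {f φ : E d → ℝ}
    (hf : Smo f) (hE : Euler f) (hφ : Smo φ) :
    ∫ σ : Sph d, (φ σ * (gammaTwo f σ - lapl f σ ^ 2)
      + ∑ i, pd i φ σ * (1 / 2 * pd i (fun y => radSq y * gradSq f y) σ - lapl f σ * pd i f σ))
        ∂(sphMeasure d) = 0 := by
  have hN := smo_radSq.mul hf.gradSq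
  have hT := smo_radSq.mul hf.lapl
  have hV : ∀ i, Smo fun x => 1 / 2 * pd i (fun y => radSq y * gradSq f y) x
      - radSq x * lapl f x * pd i f x := fun i =>
    ((Smo.const (1 / 2)).mul (hN.pd i)).sub (hT.mul (hf.pd i))
  have h := integral_div_eq_zero
    (W := fun i x => φ x * (1 / 2 * pd i (fun y => radSq y * gradSq f y) x
      - radSq x * lapl f x * pd i f x))
    (fun i => hφ.mul (hV i)) (fun x hx => by
      calc _ = φ x * (1 / 2 * (radSq x * ∑ i, x i * pd i (gradSq f) x
              + 2 * gradSq f x * radSq x)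
              - radSq x * lapl f x * ∑ i, x i * pd i f x) := by
            conv_rhs => enter [2, 1, 2, 2]; rw [radSq]
            simp only [Finset.mul_sum, ← Finset.sum_add_distrib, ← Finset.sum_sub_distrib]
            refine Finset.sum_congr rfl fun i _ => ?_
            rw [pd_radSq_mul hf.gradSq i hx]
            ring
        _ = 0 := by
            rw [hE x hx, hE.sum_coord_pd_gradSq hf hx]
            ring)
  rw [← h]
  congr 1 with σ
  have hσ := σ.ne_zero
  rw [gammaTwo, lapl_eq (fun y => radSq y * gradSq f y), sq]
  conv_lhs => enter [1, 2, 2, 2]; rw [lapl_eq]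
  simp only [Finset.mul_sum, ← Finset.sum_add_distrib, ← Finset.sum_sub_distrib]
  refine Finset.sum_congr rfl fun i _ => ?_
  rw [pd_mul hφ (hV i) i hσ, pd_sub ((Smo.const (1 / 2)).mul (hN.pd i)) (hT.mul (hf.pd i)) i hσ,
    pd_const_mul (hN.pd i) (1 / 2) i hσ, pd_mul hT (hf.pd i) i hσ, radSq_sphere]
  ring

theorem integral_exp_mul_gammaTwo [IsFiniteMeasure (sphMeasure d)] {f : E d → ℝ}
    (hf : Smo f) (hE : Euler f) :
    ∫ σ : Sph d, Real.exp (f σ) * (hessSq f σ + ((d : ℝ) - 4) * gradSq f σ - lapl f σ ^ 2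
      + hessGrad f σ - lapl f σ * gradSq f σ) ∂(sphMeasure d) = 0 := by
  rw [← integral_mul_gammaTwo hf hE hf.exp]
  congr 1 with σ
  have hσ := σ.ne_zero
  have h : ∑ i, pd i (fun x => Real.exp (f x)) σ *
      (1 / 2 * pd i (fun y => radSq y * gradSq f y) σ - lapl f σ * pd i f σ) =
      Real.exp (f σ) * (1 / 2 * ∑ i, pd i f (σ : E d) * pd i (gradSq f) σ
        + gradSq f σ * (∑ i, (σ : E d) i * pd i f σ) - lapl f σ * gradSq f σ) := by
    conv_rhs => enter [2, 2, 2]; rw [gradSq]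
    simp only [Finset.mul_sum, ← Finset.sum_add_distrib, ← Finset.sum_sub_distrib]
    refine Finset.sum_congr rfl fun i _ => ?_
    rw [pd_exp hf i hσ, pd_radSq_mul hf.gradSq i hσ, radSq_sphere]
    ring
  rw [h, hE σ hσ, sum_pd_mul_pd_gradSq hf hσ, gammaTwo_eq hf hE]
  ring

theorem integral_gammaTwo [IsFiniteMeasure (sphMeasure d)] {f : E d → ℝ}
    (hf : Smo f) (hE : Euler f) :
    ∫ σ : Sph d, (hessSq f σ + ((d : ℝ) - 4) * gradSq f σ - lapl f σ ^ 2) ∂(sphMeasure d) = 0 := by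
  rw [← integral_mul_gammaTwo hf hE (Smo.const 1)]
  congr 1 with σ
  simp only [pd_const, zero_mul, Finset.sum_const_zero, gammaTwo_eq hf hE]
  ring

theorem pd_smul {f : E d → ℝ} (hf : Smo f) {t c : ℝ} (h : ∀ x, x ≠ 0 → f (t • x) = c * f x)
    (i : Fin d) {x : E d} (hx : x ≠ 0) : t * pd i f (t • x) = c * pd i f x := by
  have h1 : (fun y => f (t • y)) =ᶠ[nhds x] fun y => c * f y := eventually_of_ne_zero h hx
  have h2 := h1.fderiv_eq (𝕜 := ℝ)
  rw [fderiv_comp_smul] at h2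
  rw [← pd_const_mul hf c i hx, pd, pd, ← h2]
  simp

theorem pd_neg_of_even {f : E d → ℝ} (hf : Smo f) (h : ∀ x, x ≠ 0 → f (-x) = f x) (i : Fin d)
    {x : E d} (hx : x ≠ 0) : pd i f (-x) = -pd i f x := by
  have := pd_smul hf (t := -1) (c := 1) (by simpa using h) i hx
  rw [neg_one_smul] at this
  linarith

/-- The spectral-gap inequality for the Laplacian on even functions. -/
theorem poincare_lapl_even [IsFiniteMeasure (sphMeasure d)] (hd : 2 ≤ d) {w : E d → ℝ}
    (hw : Smo w) (hE : Euler w) (heven : ∀ x, x ≠ 0 → w (-x) = w x) :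
    2 * d * ∫ σ : Sph d, gradSq w σ ∂(sphMeasure d) ≤
      ∫ σ : Sph d, lapl w σ ^ 2 ∂(sphMeasure d) := by
  have hf : Smo fun y => radSq y * w y := smo_radSq.mul hw
  have hfeven : ∀ x : E d, x ≠ 0 → radSq (-x) * w (-x) = radSq x * w x := by
    intro x hx
    rw [heven x hx]
    simp [radSq]
  have hdV : ∀ (i j : Fin d) (σ : Sph d), pd i (pd j fun y => radSq y * w y) (σ : E d) =
      pd i (pd j w) σ + 2 * ((σ : E d) i * pd j w σ + pd i w σ * (σ : E d) j)
        + 2 * w σ * (if i = j then 1 else 0) := by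
    intro i j σ
    have hσ := σ.ne_zero
    rw [pd_congr (fun y hy => pd_radSq_mul hw j hy) i _ hσ,
      pd_add (smo_radSq.mul (hw.pd j)) ((Smo.const 2).mul ((Smo.coord j).mul hw)) i hσ,
      pd_radSq_mul (hw.pd j) i hσ, pd_const_mul ((Smo.coord j).mul hw) 2 i hσ,
      pd_mul (Smo.coord j) hw i hσ, pd_coord, radSq_sphere]
    simp only [eq_comm (a := j)]
    ring
  have hrad : ∀ (j : Fin d) (σ : Sph d),
      ∑ i, (σ : E d) i * pd i (pd j fun y => radSq y * w y) (σ : E d) =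
        pd j (fun y => radSq y * w y) σ := by
    intro j σ
    have hσ := σ.ne_zero
    have hs : ∑ i, (σ : E d) i * pd i (pd j w) σ = -pd j w σ := by
      rw [← hE.hessian hw j hσ]
      exact Finset.sum_congr rfl fun i _ => by rw [pd_comm hw i j hσ]
    calc _ = ∑ i, (σ : E d) i * pd i (pd j w) σ + 2 * (radSq (σ : E d) * pd j w σ
            + (∑ i, (σ : E d) i * pd i w σ) * (σ : E d) j) + 2 * w σ * (σ : E d) j := by
          have : (σ : E d) j = ∑ i, (σ : E d) i * (if i = j then 1 else 0) := by simp
          conv_rhs => enter [2, 2]; rw [this]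
          rw [radSq]
          simp only [Finset.mul_sum, Finset.sum_mul, ← Finset.sum_add_distrib]
          refine Finset.sum_congr rfl fun i _ => ?_
          rw [hdV]
          ring
      _ = _ := by
          rw [hs, hE _ hσ, pd_radSq_mul hw j hσ, radSq_sphere]
          ring
  have hsq : ∀ σ : Sph d, ∑ j, pd j (fun y => radSq y * w y) (σ : E d) ^ 2 =
      gradSq w σ + 4 * w σ ^ 2 := by
    intro σ
    have hσ := σ.ne_zero
    calc _ = gradSq w σ + 4 * w σ * (∑ i, (σ : E d) i * pd i w σ)
          + 4 * w σ ^ 2 * radSq (σ : E d) := by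
          rw [gradSq, radSq]
          simp only [Finset.mul_sum, ← Finset.sum_add_distrib]
          refine Finset.sum_congr rfl fun i _ => ?_
          rw [pd_radSq_mul hw i hσ, radSq_sphere]
          ring
      _ = _ := by
          rw [hE _ hσ, radSq_sphere]
          ring
  have hhess : ∀ σ : Sph d, ∑ j, ∑ i, pd i (pd j fun y => radSq y * w y) (σ : E d) ^ 2 =
      hessSq w σ + 4 * (w σ * lapl w σ) + 4 * d * w σ ^ 2 := by
    intro σ
    have hσ := σ.ne_zero
    have h := sum_sq_perturbation (H := fun i j => pd i (pd j w) σ) (x := (σ : E d))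
      (v := fun i => pd i w σ) (fun i j => pd_comm hw i j hσ) (sum_sq_sphere σ) (hE _ hσ)
      (fun i => hE.hessian hw i hσ) 2 (2 * w σ) 0 0
    rw [Finset.sum_comm]
    calc _ = _ := Finset.sum_congr rfl fun i _ => Finset.sum_congr rfl fun j _ => by
            rw [hdV i j σ]
            ring
      _ = _ := h
      _ = _ := by
            rw [hessSq, lapl_eq]
            ring
  have hP : ∀ j : Fin d, _ := fun j => poincare_odd hd
    (fun x hx => ((hf.pd j) x hx).of_le (by simp))
    (fun x hx => pd_neg_of_even hf hfeven j hx)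
  have hsum := Finset.sum_le_sum fun j (_ : j ∈ Finset.univ) => hP j
  have hI1 : ∀ j : Fin d, Smo fun x => pd j (fun y => radSq y * w y) x ^ 2 :=
    fun j => (hf.pd j).pow 2
  have hI2 : ∀ j : Fin d, Smo fun x => ∑ i, pd i (pd j fun y => radSq y * w y) x ^ 2
      - (∑ i, x i * pd i (pd j fun y => radSq y * w y) x) ^ 2 := fun j =>
    (Smo.sum fun i => ((hf.pd j).pd i).pow 2).sub
      ((Smo.sum fun i => (Smo.coord i).mul ((hf.pd j).pd i)).pow 2)
  rw [← Finset.mul_sum, ← integral_finsetSum _ fun j _ => (hI1 j).integrable,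
    ← integral_finsetSum _ fun j _ => (hI2 j).integrable] at hsum
  simp only [Finset.sum_sub_distrib, hrad, hsq, hhess] at hsum
  have iw := (hw.pow 2).integrable
  have ig := hw.gradSq.integrable
  have ih := hw.hessSq.integrable
  have il := (hw.mul hw.lapl).integrable
  have il2 := (hw.lapl.pow 2).integrable
  have h1 := integral_gammaTwo hw hE
  have h2 := integral_mul_lapl hw hE
  rw [integral_sub (by fun_prop) (by fun_prop), integral_add (by fun_prop) (by fun_prop),
    integral_const_mul] at h1
  rw [integral_add (by fun_prop) (by fun_prop)] at h2
  rw [integral_sub (by fun_prop) (by fun_prop), integral_add (by fun_prop) (by fun_prop),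
    integral_add (by fun_prop) (by fun_prop), integral_add (by fun_prop) (by fun_prop),
    integral_const_mul, integral_const_mul, integral_const_mul] at hsum
  linarith

end IntegralIdentities

section LogSobolev

variable {d : ℕ}

/-- The spectral-gap inequality applied to `exp (f / 2)`. -/
theorem integral_exp_mul_gradSq_le [IsFiniteMeasure (sphMeasure d)] (hd : 2 ≤ d) {f : E d → ℝ}
    (hf : Smo f) (hE : Euler f) (heven : ∀ x, x ≠ 0 → f (-x) = f x) :
    2 * d * ∫ σ : Sph d, Real.exp (f σ) * gradSq f σ ∂(sphMeasure d) ≤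
      ∫ σ : Sph d, Real.exp (f σ) * (lapl f σ + 1 / 2 * gradSq f σ) ^ 2 ∂(sphMeasure d) := by
  have hf2 : Smo fun x => 1 / 2 * f x := (Smo.const _).mul hf
  have hw : Smo fun x => Real.exp (1 / 2 * f x) := hf2.exp
  have hpd : ∀ i x, x ≠ 0 → pd i (fun x => Real.exp (1 / 2 * f x)) x =
      Real.exp (1 / 2 * f x) * (1 / 2 * pd i f x) := fun i x hx => by
    rw [pd_exp hf2 i hx, pd_const_mul hf _ i hx]
  have hexp : ∀ x, Real.exp (1 / 2 * f x) ^ 2 = Real.exp (f x) := fun x => by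
    rw [← Real.exp_nat_mul]
    congr 1
    push_cast
    ring
  have hwE : Euler fun x => Real.exp (1 / 2 * f x) := fun x hx => by
    calc _ = Real.exp (1 / 2 * f x) * (1 / 2) * ∑ i, x i * pd i f x := by
          rw [Finset.mul_sum]
          refine Finset.sum_congr rfl fun i _ => ?_
          rw [hpd i x hx]
          ring
      _ = 0 := by rw [hE x hx, mul_zero]
  have hgrad : ∀ σ : Sph d, gradSq (fun x => Real.exp (1 / 2 * f x)) (σ : E d) =
      1 / 4 * (Real.exp (f σ) * gradSq f σ) := fun σ => by
    rw [gradSq, gradSq, Finset.mul_sum, Finset.mul_sum]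
    refine Finset.sum_congr rfl fun i _ => ?_
    rw [hpd i _ σ.ne_zero, mul_pow, hexp]
    ring
  have hlapl : ∀ σ : Sph d, lapl (fun x => Real.exp (1 / 2 * f x)) (σ : E d) ^ 2 =
      1 / 4 * (Real.exp (f σ) * (lapl f σ + 1 / 2 * gradSq f σ) ^ 2) := fun σ => by
    have hσ := σ.ne_zero
    have : lapl (fun x => Real.exp (1 / 2 * f x)) (σ : E d) =
        Real.exp (1 / 2 * f σ) * (1 / 2 * lapl f σ + 1 / 4 * gradSq f σ) := by
      rw [lapl_eq, lapl_eq, gradSq]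
      simp only [Finset.mul_sum, ← Finset.sum_add_distrib]
      refine Finset.sum_congr rfl fun i _ => ?_
      rw [pd_congr (hpd i) i _ hσ, pd_mul hw ((Smo.const _).mul (hf.pd i)) i hσ, hpd i _ hσ,
        pd_const_mul (hf.pd i) _ i hσ]
      ring
    rw [this, mul_pow, hexp]
    ring
  have h := poincare_lapl_even hd hw hwE fun x hx => by rw [heven x hx]
  simp only [hgrad, hlapl, integral_const_mul] at h
  linarith

/-- The log-Sobolev inequality in terms of the 0-homogeneous extension `f` of `log F`. -/
theorem integral_gradSq_le_integral_gammaTwo [IsFiniteMeasure (sphMeasure d)] (hd : 2 ≤ d)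
    {f : E d → ℝ} (hf : Smo f) (hE : Euler f) (heven : ∀ x, x ≠ 0 → f (-x) = f x) :
    ((d : ℝ) + 3 - 1 / ((d : ℝ) - 1)) *
        ∫ σ : Sph d, Real.exp (f σ) * gradSq f σ ∂(sphMeasure d) ≤
      ∫ σ : Sph d, Real.exp (f σ) * gammaTwo f σ ∂(sphMeasure d) := by
  obtain ⟨n, hn⟩ : ∃ n : ℝ, n = (d : ℝ) - 1 := ⟨_, rfl⟩
  have hdn : (d : ℝ) = n + 1 := by linarith
  have hn1 : 1 ≤ n := by
    have : (2 : ℝ) ≤ d := by exact_mod_cast hd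
    linarith
  have iA := (hf.exp.mul hf.hessSq).integrable
  have iB := (hf.exp.mul (hf.lapl.pow 2)).integrable
  have iC := (hf.exp.mul hf.hessGrad).integrable
  have iL := (hf.exp.mul (hf.lapl.mul hf.gradSq)).integrable
  have iQ := (hf.exp.mul (hf.gradSq.pow 2)).integrable
  have iI := (hf.exp.mul hf.gradSq).integrable
  have hlin : ∀ a b c l q e : ℝ,
      ∫ σ : Sph d, (a * (Real.exp (f σ) * hessSq f σ) + b * (Real.exp (f σ) * lapl f σ ^ 2)
        + c * (Real.exp (f σ) * hessGrad f σ) + l * (Real.exp (f σ) * (lapl f σ * gradSq f σ))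
        + q * (Real.exp (f σ) * gradSq f σ ^ 2) + e * (Real.exp (f σ) * gradSq f σ))
          ∂(sphMeasure d) =
      a * (∫ σ : Sph d, Real.exp (f σ) * hessSq f σ ∂(sphMeasure d))
        + b * (∫ σ : Sph d, Real.exp (f σ) * lapl f σ ^ 2 ∂(sphMeasure d))
        + c * (∫ σ : Sph d, Real.exp (f σ) * hessGrad f σ ∂(sphMeasure d))
        + l * (∫ σ : Sph d, Real.exp (f σ) * (lapl f σ * gradSq f σ) ∂(sphMeasure d))
        + q * (∫ σ : Sph d, Real.exp (f σ) * gradSq f σ ^ 2 ∂(sphMeasure d))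
        + e * ∫ σ : Sph d, Real.exp (f σ) * gradSq f σ ∂(sphMeasure d) := by
    intro a b c l q e
    rw [integral_add (by fun_prop) (by fun_prop), integral_add (by fun_prop) (by fun_prop),
      integral_add (by fun_prop) (by fun_prop), integral_add (by fun_prop) (by fun_prop),
      integral_add (by fun_prop) (by fun_prop)]
    simp only [integral_const_mul]
  have hΓ : ∫ σ : Sph d, Real.exp (f σ) * gammaTwo f σ ∂(sphMeasure d) = _ :=
    (integral_congr_ae (.of_forall fun σ => by
      simp only [gammaTwo_eq hf hE, hdn]
      ring)).trans (hlin 1 0 0 0 0 (n - 3))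
  have h1 := ((hlin 0 0 2 1 1 0).symm.trans (integral_congr_ae (.of_forall fun σ => by
    ring))).trans (integral_exp_mul_lapl_mul_gradSq hf hE)
  have h2 := ((hlin 1 (-1) 1 (-1) 0 (n - 3)).symm.trans (integral_congr_ae (.of_forall fun σ => by
    simp only [hdn]
    ring))).trans (integral_exp_mul_gammaTwo hf hE)
  have h3 := (integral_exp_mul_gradSq_le hd hf hE heven).trans_eq
    ((integral_congr_ae (.of_forall fun σ => by
      ring)).trans (hlin 0 1 0 1 (1 / 4) 0))
  have h4 := (integral_nonneg (μ := sphMeasure d) fun σ : Sph d =>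
    mul_nonneg (Real.exp_pos (f σ)).le
      (hessian_inequality hd (fun i j => pd_comm hf i j σ.ne_zero) (sum_sq_sphere σ)
        (hE _ σ.ne_zero) (fun i => hE.hessian hf i σ.ne_zero) hn)).trans_eq
    ((integral_congr_ae (.of_forall fun σ => by
      rw [← hessSq, ← gradSq, ← hessGrad, ← lapl_eq]
      ring)).trans (hlin (n * (n - 1)) (-(n - 1)) (-n) 1 (1 / 4) (-2 * n * (n - 1))))
  rw [hΓ, ← hn, hdn]
  rw [hdn] at h3
  generalize (∫ σ : Sph d, Real.exp (f σ) * hessSq f σ ∂(sphMeasure d)) = A at *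
  generalize (∫ σ : Sph d, Real.exp (f σ) * lapl f σ ^ 2 ∂(sphMeasure d)) = B at *
  generalize (∫ σ : Sph d, Real.exp (f σ) * hessGrad f σ ∂(sphMeasure d)) = C at *
  generalize (∫ σ : Sph d, Real.exp (f σ) * (lapl f σ * gradSq f σ) ∂(sphMeasure d)) = L at *
  generalize (∫ σ : Sph d, Real.exp (f σ) * gradSq f σ ^ 2 ∂(sphMeasure d)) = Q at *
  generalize (∫ σ : Sph d, Real.exp (f σ) * gradSq f σ ∂(sphMeasure d)) = I at *
  have h5 := mul_nonneg (by linarith : 0 ≤ 4 * n - 1) (sub_nonneg.2 h3)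
  have hn0 : n ≠ 0 := by linarith
  have h6 : n * (n + 2) * (A + (n - 3) * I - (n + 1 + 3 - 1 / n) * I) =
      (4 * n - 1) * (B + L + 1 / 4 * Q - 2 * (n + 1) * I)
        + (n * (n - 1) * A - (n - 1) * B - n * C + L + 1 / 4 * Q - 2 * n * (n - 1) * I) := by
    field_simp
    linear_combination 12 * n * h2 - 4 * n * h1
  have h7 : 0 ≤ A + (n - 3) * I - (n + 1 + 3 - 1 / n) * I := by
    refine nonneg_of_mul_nonneg_right (a := n * (n + 2)) ?_ (by positivity)
    rw [h6]
    linarith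
  linarith

theorem homogExt_apply {g : Sph d → ℝ} {f : E d → ℝ} (h : ∀ σ : Sph d, g σ = f σ) {x : E d}
    (hx : x ≠ 0) : homogExt g x = f (‖x‖⁻¹ • x) := by
  rw [homogExt, dif_neg hx, h]

theorem homogExt_sphere (g : Sph d → ℝ) (σ : Sph d) : homogExt g σ = g σ := by
  rw [homogExt, dif_neg σ.ne_zero]
  congr 1
  ext1
  simp

theorem homogExt_smul (g : Sph d → ℝ) {t : ℝ} (ht : 0 < t) (x : E d) :
    homogExt g (t • x) = homogExt g x := by
  rcases eq_or_ne x 0 with rfl | hx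
  · rw [smul_zero]
  · rw [homogExt, homogExt, dif_neg hx, dif_neg (smul_ne_zero ht.ne' hx)]
    congr 2
    rw [norm_smul, Real.norm_of_nonneg ht.le, smul_smul]
    congr 1
    field_simp

theorem homogExt_neg {g : Sph d → ℝ} (hg : ∀ σ, g (-σ) = g σ) (x : E d) :
    homogExt g (-x) = homogExt g x := by
  rcases eq_or_ne x 0 with rfl | hx
  · rw [neg_zero]
  · rw [homogExt, homogExt, dif_neg hx, dif_neg (neg_ne_zero.2 hx), ← hg]
    congr 1
    ext1
    simp

theorem homogExt_log (F : Sph d → ℝ) (x : E d) :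
    homogExt (fun τ => Real.log (F τ)) x = Real.log (homogExt F x) := by
  unfold homogExt
  split_ifs <;> simp

theorem SphSmooth.smo {F : Sph d → ℝ} (hF : SphSmooth F) : Smo (homogExt F) := fun x hx =>
  (hF x hx).contDiffAt (isOpen_ne.mem_nhds hx)

theorem SphSmooth.smo_log {F : Sph d → ℝ} (hF : SphSmooth F) (hpos : ∀ σ, 0 < F σ) :
    Smo (homogExt fun τ => Real.log (F τ)) := fun x hx => by
  rw [funext (homogExt_log F)]
  refine (hF.smo x hx).log ?_
  rw [homogExt, dif_neg hx]
  exact (hpos _).ne'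

theorem euler_homogExt {g : Sph d → ℝ} (hg : Smo (homogExt g)) : Euler (homogExt g) := by
  intro x hx
  rw [← fderiv_eq_sum_pd]
  have h1 : HasDerivAt (fun t : ℝ => t • x) x 1 := by
    simpa using (hasDerivAt_id (1 : ℝ)).smul_const x
  have h2 : HasFDerivAt (homogExt g) (fderiv ℝ (homogExt g) x) ((1 : ℝ) • x) := by
    rw [one_smul]
    exact (hg.differentiableAt hx).hasFDerivAt
  have h3 := h2.comp_hasDerivAt (1 : ℝ) h1
  have h4 : (homogExt g ∘ fun t : ℝ => t • x) =ᶠ[nhds 1] fun _ => homogExt g x := by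
    filter_upwards [Ioi_mem_nhds zero_lt_one] with t ht using homogExt_smul g ht x
  exact h3.unique ((hasDerivAt_const _ _).congr_of_eventuallyEq h4)

theorem gradient_apply (f : E d → ℝ) (x : E d) (i : Fin d) : gradient f x i = pd i f x := by
  rw [pd, ← InnerProductSpace.toDual_symm_apply (𝕜 := ℝ), EuclideanSpace.inner_single_right]
  simp [gradient]

theorem norm_sphGrad_sq (g : Sph d → ℝ) (σ : Sph d) :
    ‖sphGrad g σ‖ ^ 2 = gradSq (homogExt g) σ := by
  simp only [sphGrad, EuclideanSpace.real_norm_sq_eq, gradient_apply, gradSq]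

theorem inner_sphGrad (g h : Sph d → ℝ) (σ : Sph d) :
    ⟪sphGrad g σ, sphGrad h σ⟫ = ∑ i, pd i (homogExt g) σ * pd i (homogExt h) σ := by
  simp only [sphGrad, PiLp.inner_apply, gradient_apply]
  simp [mul_comm]

theorem lapl_congr {f g : E d → ℝ} (h : ∀ x, x ≠ 0 → f x = g x) {x : E d} (hx : x ≠ 0) :
    lapl f x = lapl g x := by
  rw [lapl_eq, lapl_eq]
  exact Finset.sum_congr rfl fun i _ => pd_congr (pd_congr h i) i x hx

theorem pd_homogExt_smul {g : Sph d → ℝ} (hg : Smo (homogExt g)) (i : Fin d) {x : E d}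
    (hx : x ≠ 0) {t : ℝ} (ht : 0 < t) :
    pd i (homogExt g) (t • x) = t⁻¹ * pd i (homogExt g) x := by
  have := pd_smul hg (t := t) (c := 1) (fun y _ => by rw [homogExt_smul g ht, one_mul]) i hx
  field_simp
  linarith

theorem homogExt_norm_sphGrad_sq {g : Sph d → ℝ} (hg : Smo (homogExt g)) (x : E d) (hx : x ≠ 0) :
    homogExt (fun τ => ‖sphGrad g τ‖ ^ 2) x = radSq x * gradSq (homogExt g) x := by
  have hx' := norm_pos_iff.2 hx
  rw [homogExt_apply (norm_sphGrad_sq g) hx, radSq, ← EuclideanSpace.real_norm_sq_eq, gradSq,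
    gradSq, Finset.mul_sum]
  refine Finset.sum_congr rfl fun i _ => ?_
  rw [pd_homogExt_smul hg i hx (inv_pos.2 hx'), inv_inv, mul_pow]

theorem homogExt_sphLap {g : Sph d → ℝ} (hg : Smo (homogExt g)) (x : E d) (hx : x ≠ 0) :
    homogExt (fun τ => sphLap g τ) x = radSq x * lapl (homogExt g) x := by
  have hx' := norm_pos_iff.2 hx
  rw [homogExt_apply (fun σ => (rfl : sphLap g σ = lapl (homogExt g) σ)) hx, radSq,
    ← EuclideanSpace.real_norm_sq_eq, lapl_eq, lapl_eq, Finset.mul_sum]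
  refine Finset.sum_congr rfl fun i _ => ?_
  have := pd_smul (hg.pd i) (fun y hy => pd_homogExt_smul hg i hy (inv_pos.2 hx')) i hx
  rw [inv_inv] at this
  field_simp at this
  simpa only [one_div] using this

theorem Gamma2DD_eq {g : Sph d → ℝ} (hg : Smo (homogExt g)) (σ : Sph d) :
    Gamma2DD g σ = gammaTwo (homogExt g) σ := by
  have hσ := σ.ne_zero
  rw [Gamma2DD, gammaTwo, inner_sphGrad, sphLap, lapl_congr (homogExt_norm_sphGrad_sq hg) hσ]
  simp only [pd_congr (homogExt_sphLap hg) _ _ hσ]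

theorem Smo.gammaTwo {f : E d → ℝ} (hf : Smo f) : Smo (gammaTwo f) :=
  ((Smo.const _).mul (smo_radSq.mul hf.gradSq).lapl).sub
    (Smo.sum fun i => (hf.pd i).mul ((smo_radSq.mul hf.lapl).pd i))

end LogSobolev

/-- The log-Sobolev inequality for the spherical Laplacian with constant
`Λ_Δ = d + 3 - 1/(d-1)`, which is `> d`. -/
theorem logSobolev_laplacian
    (d : ℕ) (hd : 2 ≤ d) :
    (∀ F : Sph d → ℝ, SphSmooth F → (∀ σ, 0 < F σ) → (∀ σ, F (-σ) = F σ) →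
      ((d : ℝ) + 3 - 1 / ((d : ℝ) - 1)) *
          (∫ (σ : Sph d), ‖sphGrad (fun τ => Real.log (F τ)) σ‖ ^ 2 * F σ ∂(sphMeasure d))
        ≤ ∫ (σ : Sph d), Gamma2DD (fun τ => Real.log (F τ)) σ * F σ ∂(sphMeasure d)) ∧
    (d : ℝ) < (d : ℝ) + 3 - 1 / ((d : ℝ) - 1) := by
  have hd2 : (2 : ℝ) ≤ d := by exact_mod_cast hd
  refine ⟨fun F hF hpos heven => ?_, ?_⟩
  · have hs := hF.smo_log hpos
    set f := homogExt fun τ => Real.log (F τ) with hf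
    have hexp : ∀ σ : Sph d, F σ = Real.exp (f σ) := fun σ => by
      rw [hf, homogExt_sphere, Real.exp_log (hpos σ)]
    have hgrad : ∀ σ : Sph d, ‖sphGrad (fun τ => Real.log (F τ)) σ‖ ^ 2 * F σ =
        Real.exp (f σ) * gradSq f σ := fun σ => by
      rw [norm_sphGrad_sq, ← hf, hexp σ, mul_comm]
    have hΓ : ∀ σ : Sph d, Gamma2DD (fun τ => Real.log (F τ)) σ * F σ =
        Real.exp (f σ) * gammaTwo f σ := fun σ => by
      rw [Gamma2DD_eq hs, ← hf, hexp σ, mul_comm]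
    simp only [hgrad, hΓ]
    by_cases hμ : IsFiniteMeasure (sphMeasure d)
    · exact integral_gradSq_le_integral_gammaTwo hd hs (euler_homogExt hs) fun x _ =>
        homogExt_neg (fun σ => by rw [heven]) x
    · rw [integral_eq_zero_of_not_isFiniteMeasure hμ (hs.exp.mul hs.gradSq).continuous_sphere,
        integral_eq_zero_of_not_isFiniteMeasure hμ (hs.exp.mul hs.gammaTwo).continuous_sphere,
        mul_zero]
  · have : 1 / ((d : ℝ) - 1) ≤ 1 := by
      rw [div_le_one (by linarith)]
      linarith
    linarith
end
end
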